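/- Let S_π be a positroid cell of the totally nonnegative Grassmannian Gr⁺_{k,n} with corresponding positroid M_π. Then the following are equivalent: (1) the moment map μ restricts to an injection on S_π; (2) μ restricts to a homeomorphism from the closure of S_π onto the positroid polytope Γ_π; (3) dim S_π = dim Γ_π = n − c, where c is the number of connected components of M_π. -/

import Mathlib

open scoped BigOperators

/-- The indicator vector `e_B ∈ ℝⁿ`. -/
noncomputable def ind (n : ℕ) (B : Finset (Fin n)) : Fin n → ℝ :=
  fun i => if i ∈ B then 1 else 0

/-- The maximal minor of a `k × n` matrix with column set `I` (zero if `|I| ≠ k`). -/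
noncomputable def minor (k n : ℕ) (A : Matrix (Fin k) (Fin n) ℝ) (I : Finset (Fin n)) : ℝ :=
  if h : I.card = k then (A.submatrix id fun j : Fin k => ((I.orderIsoOfFin h j : I) : Fin n)).det
  else 0

/-- Exchange relation on `[n]` whose equivalence classes are the connected
components of the matroid with bases `𝓜`. -/
def exchRel (n : ℕ) (𝓜 : Finset (Finset (Fin n))) (a b : Fin n) : Prop :=
  a = b ∨ ∃ B₁ ∈ 𝓜, ∃ B₂ ∈ 𝓜, a ∈ B₁ ∧ b ∉ B₁ ∧ B₂ = insert b (B₁.erase a)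

/-- The positroid cell `S_𝓜` inside the totally nonnegative Grassmannian,
realized via (normalized) Plücker vectors: points `p` in the image of the
Plücker embedding with `∑ p_I² = 1`, whose coordinates indexed by `𝓜` are
positive and all other coordinates vanish. -/
def positroidCell (n k : ℕ) (𝓜 : Finset (Finset (Fin n))) :
    Set (Finset (Fin n) → ℝ) :=
  {p | (∃ A : Matrix (Fin k) (Fin n) ℝ, ∀ I : Finset (Fin n), p I = minor k n A I) ∧
       (∑ I : Finset (Fin n), (p I) ^ 2) = 1 ∧
       (∀ I : Finset (Fin n), (I ∈ 𝓜 → 0 < p I) ∧ (I ∉ 𝓜 → p I = 0))}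

/-- The moment map `μ`, sending a normalized Plücker vector to
`∑_I p_I² e_I ∈ ℝⁿ`. -/
noncomputable def momentMap (n : ℕ) (p : Finset (Fin n) → ℝ) : Fin n → ℝ :=
  fun i => ∑ I : Finset (Fin n), (if i ∈ I then (p I) ^ 2 else 0)

/-! ### Maximal minors -/

section Minors

variable {k n : ℕ}

/-- The determinant of the columns of `A` listed by `g`. -/
noncomputable def colDet (A : Matrix (Fin k) (Fin n) ℝ) (g : Fin k → Fin n) : ℝ :=
  (A.submatrix id g).det

lemma minor_of_card (A : Matrix (Fin k) (Fin n) ℝ) {I : Finset (Fin n)} (h : I.card = k) :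
    minor k n A I = colDet A (I.orderEmbOfFin h) := by
  simp only [minor, h, dif_pos, colDet]
  rfl

lemma minor_eq_zero_of_card_ne (A : Matrix (Fin k) (Fin n) ℝ) {I : Finset (Fin n)}
    (h : I.card ≠ k) : minor k n A I = 0 := by
  simp [minor, h]

lemma colDet_comp_perm (A : Matrix (Fin k) (Fin n) ℝ) (g : Fin k → Fin n)
    (σ : Equiv.Perm (Fin k)) : colDet A (g ∘ σ) = Equiv.Perm.sign σ * colDet A g := by
  have := Matrix.det_permute' σ (A.submatrix id g)
  simpa [colDet, Matrix.submatrix_submatrix] using this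

lemma colDet_eq_zero_of_eq (A : Matrix (Fin k) (Fin n) ℝ) {g : Fin k → Fin n} {i j : Fin k}
    (hij : i ≠ j) (h : g i = g j) : colDet A g = 0 :=
  Matrix.det_zero_of_column_eq hij fun r => by simp [h]

/-- Every injective listing of columns is a permutation of the increasing one. -/
lemma exists_perm_minor {g : Fin k → Fin n} (hg : Function.Injective g) :
    ∃ σ : Equiv.Perm (Fin k), StrictMono (g ∘ σ) ∧ ∀ A : Matrix (Fin k) (Fin n) ℝ,
      minor k n A (Finset.univ.image g) = Equiv.Perm.sign σ * colDet A g := by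
  have hmono : StrictMono (g ∘ Tuple.sort g) :=
    (Tuple.monotone_sort g).strictMono_of_injective (hg.comp (Tuple.sort g).injective)
  refine ⟨Tuple.sort g, hmono, fun A => ?_⟩
  have hc : (Finset.univ.image g).card = k := by
    rw [Finset.card_image_of_injective _ hg]; simp
  rw [minor_of_card A hc, ← colDet_comp_perm,
    Finset.orderEmbOfFin_unique hc (f := g ∘ Tuple.sort g) (fun x => by simp) hmono]

lemma minor_image_ne_zero_iff (A : Matrix (Fin k) (Fin n) ℝ) {g : Fin k → Fin n}
    (hg : Function.Injective g) :
    minor k n A (Finset.univ.image g) ≠ 0 ↔ colDet A g ≠ 0 := by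
  obtain ⟨σ, -, h⟩ := exists_perm_minor hg
  rw [h]
  rcases Int.units_eq_one_or (Equiv.Perm.sign σ) with h | h <;> simp [h]

/-- The sign relating a listing of columns to the increasing one is that of the Vandermonde
determinant. -/
lemma minor_mul_abs_vandermonde (A : Matrix (Fin k) (Fin n) ℝ) {g : Fin k → Fin n}
    (hg : Function.Injective g) :
    minor k n A (Finset.univ.image g) * |(Matrix.vandermonde fun i => ((g i : ℕ) : ℝ)).det|
      = colDet A g * (Matrix.vandermonde fun i => ((g i : ℕ) : ℝ)).det := by
  obtain ⟨σ, hmono, h⟩ := exists_perm_minor hg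
  rw [h]
  set V := (Matrix.vandermonde fun i => ((g i : ℕ) : ℝ)).det with hV
  have h1 : (Matrix.vandermonde fun i => ((g (σ i) : ℕ) : ℝ)).det = Equiv.Perm.sign σ * V := by
    rw [hV, ← Matrix.det_permute σ]
    rfl
  have h2 : 0 < (Matrix.vandermonde fun i => ((g (σ i) : ℕ) : ℝ)).det := by
    rw [Matrix.det_vandermonde]
    refine Finset.prod_pos fun i _ => Finset.prod_pos fun j hj => ?_
    have : g (σ i) < g (σ j) := hmono (Finset.mem_Ioi.1 hj)
    rw [sub_pos]
    exact_mod_cast this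
  rcases Int.units_eq_one_or (Equiv.Perm.sign σ) with hs | hs <;> rw [hs] at h1 ⊢ <;>
    simp only [Units.val_one, Int.cast_one, one_mul, Units.val_neg, Int.cast_neg, neg_mul] at h1 ⊢
  · rw [abs_of_pos (h1 ▸ h2)]
  · rw [abs_of_neg (by linarith)]; ring

/-- `1` if `u < v` and `-1` otherwise. -/
noncomputable def ordSign (u v : Fin n) : ℝ := if u < v then 1 else -1

lemma colDet_update (A : Matrix (Fin k) (Fin n) ℝ) (g : Fin k → Fin n) (i : Fin k) (x : Fin n) :
    colDet A (Function.update g i x) = (A.submatrix id g).cramer (fun r => A r x) i := by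
  rw [Matrix.cramer_apply, colDet]
  congr 1
  ext r j
  by_cases h : j = i
  · subst h; simp
  · simp [h]

/-- The Grassmann–Plücker relation exchanging one column. -/
lemma colDet_mul_colDet (A : Matrix (Fin k) (Fin n) ℝ) (g h : Fin k → Fin n) (j : Fin k) :
    colDet A g * colDet A h = ∑ i, colDet A (Function.update g i (h j)) *
      colDet A (Function.update h j (g i)) := by
  set G := A.submatrix id g
  set H := A.submatrix id h
  have h1 : (fun r => G.det * A r (h j)) =
      ∑ i, G.cramer (fun r => A r (h j)) i • fun r => A r (g i) := by
    have := Matrix.mulVec_cramer G (fun r => A r (h j))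
    ext r
    have := congrFun this r
    simp only [Matrix.mulVec, dotProduct, Pi.smul_apply, smul_eq_mul] at this
    rw [← this, Finset.sum_apply]
    exact Finset.sum_congr rfl fun i _ => by simp [G, mul_comm]
  have h2 : H.cramer (fun r => G.det * A r (h j)) j = G.det * H.det := by
    have : (fun r => G.det * A r (h j)) = G.det • fun r => A r (h j) := rfl
    rw [this, map_smul, Pi.smul_apply, ← colDet_update, Function.update_eq_self]
    rfl
  simp only [colDet_update]
  change G.det * H.det = _
  rw [← h2, h1, map_sum, Finset.sum_apply]
  simp [G, H]

/-- The three-term Grassmann–Plücker relation for listings of columns. -/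
lemma colDet_three_term {m : ℕ} (A : Matrix (Fin (m + 2)) (Fin n) ℝ) (g : Fin m → Fin n)
    (a b c d : Fin n) :
    colDet A (Fin.cons a (Fin.cons b g)) * colDet A (Fin.cons c (Fin.cons d g)) =
      colDet A (Fin.cons a (Fin.cons c g)) * colDet A (Fin.cons b (Fin.cons d g)) +
      colDet A (Fin.cons c (Fin.cons b g)) * colDet A (Fin.cons a (Fin.cons d g)) := by
  rw [colDet_mul_colDet A _ _ 0, Fin.sum_univ_succ, Fin.sum_univ_succ, Finset.sum_eq_zero]
  · simp only [Fin.cons_zero, Fin.update_cons_zero, ← Fin.cons_update, Fin.cons_succ]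
    ring
  · intro i _
    refine mul_eq_zero_of_right _ (colDet_eq_zero_of_eq A (i := 0) (j := i.succ.succ) ?_ ?_)
    · exact (Fin.succ_ne_zero _).symm
    · simp

lemma colDet_swap {m : ℕ} (A : Matrix (Fin (m + 2)) (Fin n) ℝ) (g : Fin m → Fin n)
    (a b : Fin n) :
    colDet A (Fin.cons a (Fin.cons b g)) = -colDet A (Fin.cons b (Fin.cons a g)) := by
  have := colDet_comp_perm A (Fin.cons b (Fin.cons a g)) (Equiv.swap 0 1)
  rw [Equiv.Perm.sign_swap (by simp)] at this
  have h : (Fin.cons b (Fin.cons a g) : Fin (m + 2) → Fin n) ∘ Equiv.swap 0 1 =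
      Fin.cons a (Fin.cons b g) := by
    ext i
    refine Fin.cases ?_ (fun i => ?_) i
    · rw [Function.comp_apply, Equiv.swap_apply_left]
      rfl
    · refine Fin.cases ?_ (fun i => ?_) i
      · rw [Function.comp_apply, Fin.succ_zero_eq_one, Equiv.swap_apply_right]
        rfl
      · rw [Function.comp_apply, Equiv.swap_apply_of_ne_of_ne] <;> simp [Fin.ext_iff]
  rw [h] at this
  simpa using this

lemma exists_sign_minor_insert {m : ℕ} {S : Finset (Fin n)} (hS : S.card = m) :
    ∃ χ : Fin n → ℝ, (∀ u, χ u ^ 2 = 1) ∧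
      ∀ (A : Matrix (Fin (m + 2)) (Fin n) ℝ) (u v : Fin n), u ∉ S → v ∉ S → u ≠ v →
        minor (m + 2) n A (insert u (insert v S)) = χ u * χ v * ordSign u v *
          colDet A (Fin.cons u (Fin.cons v (S.orderEmbOfFin hS))) := by
  set g := S.orderEmbOfFin hS with hg
  set P : Fin n → ℝ := fun u => ∏ j, (((g j : ℕ) : ℝ) - (u : ℕ)) with hP
  have hP0 : ∀ u ∉ S, P u ≠ 0 := by
    intro u hu
    refine Finset.prod_ne_zero_iff.2 fun j _ => ?_
    rw [sub_ne_zero]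
    intro h
    have : g j = u := Fin.ext (by exact_mod_cast h)
    exact hu (this ▸ S.orderEmbOfFin_mem hS j)
  refine ⟨fun u => if 0 < P u then 1 else -1, fun u => by dsimp only; split_ifs <;> norm_num, ?_⟩
  intro A u v hu hv huv
  set G : Fin (m + 2) → Fin n := Fin.cons u (Fin.cons v g) with hG
  have hginj : Function.Injective g := g.injective
  have hgS : ∀ j, g j ∈ S := S.orderEmbOfFin_mem hS
  have hinj : Function.Injective G := by
    rw [hG, Fin.cons_injective_iff, Fin.cons_injective_iff]
    refine ⟨?_, ?_, hginj⟩
    · rintro ⟨j, hj⟩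
      revert hj
      refine Fin.cases (fun h => huv (by simpa using h.symm)) (fun i h => ?_) j
      exact hu (by rw [← h]; simpa using hgS i)
    · rintro ⟨j, hj⟩
      exact hv (hj ▸ hgS j)
  have himg : Finset.univ.image G = insert u (insert v S) := by
    have : Finset.univ.image g = S := by
      rw [hg]; exact Finset.coe_injective (by simp)
    ext x
    simp [hG, Fin.exists_fin_succ, ← this, eq_comm]
  have key := minor_mul_abs_vandermonde A hinj
  rw [himg] at key
  set V := (Matrix.vandermonde fun j => ((g j : ℕ) : ℝ)).det with hV
  have hVpos : 0 < V := by
    rw [hV, Matrix.det_vandermonde]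
    refine Finset.prod_pos fun i _ => Finset.prod_pos fun j hj => ?_
    have : g i < g j := g.strictMono (Finset.mem_Ioi.1 hj)
    rw [sub_pos]
    exact_mod_cast this
  have hdet : (Matrix.vandermonde fun i => ((G i : ℕ) : ℝ)).det =
      (((v : ℕ) : ℝ) - (u : ℕ)) * P u * (P v * V) := by
    rw [Matrix.det_vandermonde, Fin.prod_univ_succ, Fin.prod_univ_succ, hV,
      Matrix.det_vandermonde]
    simp only [Fin.prod_Ioi_zero, Fin.prod_Ioi_succ, Fin.prod_univ_succ, hG, Fin.cons_zero,
      Fin.cons_succ, hP]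
  rw [hdet, abs_mul, abs_mul, abs_mul, abs_of_pos hVpos] at key
  have hsg : ∀ x : ℝ, x ≠ 0 → x = (if 0 < x then 1 else -1) * |x| := by
    intro x hx
    split_ifs with h
    · rw [abs_of_pos h, one_mul]
    · rw [abs_of_neg (lt_of_le_of_ne (not_lt.1 h) hx)]; ring
  have hvu : ((v : ℕ) : ℝ) - (u : ℕ) ≠ 0 := by
    rw [sub_ne_zero]; exact fun h => huv (Fin.ext (by exact_mod_cast h.symm))
  have hos : ordSign u v = if 0 < ((v : ℕ) : ℝ) - (u : ℕ) then 1 else -1 := by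
    simp [ordSign]
  have hne : |((v : ℕ) : ℝ) - (u : ℕ)| * |P u| * (|P v| * V) ≠ 0 := by
    have := hP0 u hu
    have := hP0 v hv
    positivity
  refine mul_right_cancel₀ hne (key.trans ?_)
  rw [hos]
  nth_rewrite 1 [hsg _ hvu, hsg _ (hP0 u hu), hsg _ (hP0 v hv)]
  ring

end Minors

/-! ### Plücker vectors -/

section Pluecker

variable {k n : ℕ}

/-- `p` is the vector of maximal minors of a `k × n` matrix. -/
def IsMinorVector (k n : ℕ) (p : Finset (Fin n) → ℝ) : Prop :=
  ∃ A : Matrix (Fin k) (Fin n) ℝ, ∀ I : Finset (Fin n), p I = minor k n A I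

lemma IsMinorVector.card_eq {p : Finset (Fin n) → ℝ} (hp : IsMinorVector k n p)
    {I : Finset (Fin n)} (hI : p I ≠ 0) : I.card = k := by
  obtain ⟨A, hA⟩ := hp
  by_contra h
  exact hI (by rw [hA, minor_eq_zero_of_card_ne A h])

/-- The basis exchange property. -/
lemma IsMinorVector.exchange {p : Finset (Fin n) → ℝ} (hp : IsMinorVector k n p)
    {B B' : Finset (Fin n)} (hB : p B ≠ 0) (hB' : p B' ≠ 0) {a : Fin n} (ha : a ∈ B)
    (ha' : a ∉ B') : ∃ b ∈ B', b ∉ B ∧ p (insert b (B.erase a)) ≠ 0 := by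
  have hc := hp.card_eq hB
  have hc' := hp.card_eq hB'
  obtain ⟨A, hA⟩ := hp
  rw [hA, minor_of_card A hc] at hB
  rw [hA, minor_of_card A hc'] at hB'
  set h := B.orderEmbOfFin hc with hh
  set g := B'.orderEmbOfFin hc' with hg
  obtain ⟨j, hj⟩ : ∃ j, h j = a := by
    have : a ∈ Set.range h := by rw [hh, Finset.range_orderEmbOfFin]; exact ha
    exact this
  have hsum := colDet_mul_colDet A g h j
  obtain ⟨i, -, hi⟩ := Finset.exists_ne_zero_of_sum_ne_zero (hsum ▸ mul_ne_zero hB' hB)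
  have hi := right_ne_zero_of_mul hi
  have hgB' : g i ∈ B' := B'.orderEmbOfFin_mem hc' i
  have hgB : g i ∉ B := by
    intro hmem
    have : g i ∈ Set.range h := by rw [hh, Finset.range_orderEmbOfFin]; exact hmem
    obtain ⟨l, hl⟩ := this
    have hlj : l ≠ j := by
      rintro rfl
      exact ha' (hj ▸ hl ▸ hgB')
    refine hi (colDet_eq_zero_of_eq A hlj ?_)
    rw [Function.update_of_ne hlj, Function.update_self, hl]
  refine ⟨g i, hgB', hgB, ?_⟩
  have hinj : Function.Injective (Function.update h j (g i)) := by
    intro x y hxy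
    have hne : ∀ z, h z ≠ g i := fun z hz => hgB (hz ▸ B.orderEmbOfFin_mem hc z)
    by_cases hx : x = j <;> by_cases hy : y = j
    · rw [hx, hy]
    · subst hx; simp [hy] at hxy; exact absurd hxy.symm (hne y)
    · subst hy; simp [hx] at hxy; exact absurd hxy (hne x)
    · simpa [hx, hy] using hxy
  have himg : Finset.univ.image (Function.update h j (g i)) = insert (g i) (B.erase a) := by
    have hBi : B = Finset.univ.image h := by
      rw [hh]; exact Finset.coe_injective (by simp)
    ext x
    simp only [Finset.mem_image, Finset.mem_univ, true_and, Finset.mem_insert, Finset.mem_erase]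
    rw [hBi]
    simp only [Finset.mem_image, Finset.mem_univ, true_and]
    constructor
    · rintro ⟨z, rfl⟩
      by_cases hz : z = j
      · subst hz; simp
      · right; simp [hz, ← hj]
    · rintro (rfl | ⟨hx, z, rfl⟩)
      · exact ⟨j, by simp⟩
      · exact ⟨z, by rw [Function.update_of_ne]; rintro rfl; exact hx hj⟩
  rw [hA, ← himg]
  exact (minor_image_ne_zero_iff A hinj).2 hi

/-- The three-term relation for sorted minors, when no column separates `s` from `t`. -/
lemma IsMinorVector.three_term {p : Finset (Fin n) → ℝ} (hp : IsMinorVector k n p)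
    {S : Finset (Fin n)} {a b s t : Fin n} (hk : S.card + 2 = k) (haS : a ∉ S) (hbS : b ∉ S)
    (hsS : s ∉ S) (htS : t ∉ S) (hab : a ≠ b) (has : a ≠ s) (hat : a ≠ t) (hbs : b ≠ s)
    (hbt : b ≠ t) (hst : s ≠ t) (ha : ordSign a t = ordSign a s)
    (hb : ordSign b t = ordSign b s) :
    p (insert s (insert a S)) * p (insert t (insert b S)) -
      p (insert t (insert a S)) * p (insert s (insert b S)) =
    ordSign a s * ordSign b s * ordSign a b * ordSign s t *
      (p (insert a (insert b S)) * p (insert s (insert t S))) := by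
  obtain ⟨A, hA⟩ := hp
  subst hk
  obtain ⟨χ, hχ, h⟩ := exists_sign_minor_insert (n := n) (S := S) rfl
  have hsq : ∀ u v : Fin n, ordSign u v ^ 2 = 1 := by
    intro u v; unfold ordSign; split_ifs <;> norm_num
  rw [Finset.insert_comm s a, Finset.insert_comm t b, Finset.insert_comm t a,
    Finset.insert_comm s b]
  simp only [hA, h A a s haS hsS has, h A b t hbS htS hbt, h A a t haS htS hat,
    h A b s hbS hsS hbs, h A a b haS hbS hab, h A s t hsS htS hst, ha, hb]
  have h3 := colDet_three_term A (S.orderEmbOfFin rfl) a b s t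
  rw [colDet_swap A _ s b] at h3
  linear_combination (-χ a * χ b * χ s * χ t * ordSign a s * ordSign b s) * h3 -
    χ a * χ b * χ s * χ t * ordSign a s * ordSign b s *
      colDet A (Fin.cons a (Fin.cons b (S.orderEmbOfFin rfl))) *
      colDet A (Fin.cons s (Fin.cons t (S.orderEmbOfFin rfl))) *
      (ordSign s t ^ 2 * hsq a b + hsq s t)

/-- The effect on minors of rescaling columns. -/
lemma IsMinorVector.torus {p : Finset (Fin n) → ℝ} (hp : IsMinorVector k n p) (c : Fin n → ℝ) :
    IsMinorVector k n fun I => (∏ i ∈ I, c i) * p I := by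
  obtain ⟨A, hA⟩ := hp
  refine ⟨Matrix.of fun i j => c j * A i j, fun I => ?_⟩
  change (∏ i ∈ I, c i) * p I = _
  by_cases hI : I.card = k
  · rw [hA, minor_of_card _ hI, minor_of_card _ hI]
    have := Matrix.det_mul_row (fun j => c (I.orderEmbOfFin hI j))
      (A.submatrix id (I.orderEmbOfFin hI))
    have hprod : ∏ i ∈ I, c i = ∏ j, c (I.orderEmbOfFin hI j) := by
      conv_lhs => rw [← Finset.image_orderEmbOfFin_univ I hI]
      rw [Finset.prod_image fun x _ y _ h => (I.orderEmbOfFin hI).injective h]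
    rw [hprod]
    exact this.symm
  · rw [hA, minor_eq_zero_of_card_ne _ hI, minor_eq_zero_of_card_ne _ hI, mul_zero]

lemma IsMinorVector.smul {p : Finset (Fin n) → ℝ} (hp : IsMinorVector k n p) (c : ℝ)
    (h : k = 0 → c = 1) : IsMinorVector k n (c • p) := by
  rcases k with _ | k
  · rw [h rfl, one_smul]; exact hp
  · obtain ⟨A, hA⟩ := hp
    refine ⟨A.updateRow 0 (c • A 0), fun I => ?_⟩
    by_cases hI : I.card = k + 1
    · rw [Pi.smul_apply, hA, minor_of_card _ hI, minor_of_card _ hI, smul_eq_mul]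
      have := Matrix.det_updateRow_smul (A.submatrix id (I.orderEmbOfFin hI)) 0 c
        (A.submatrix id (I.orderEmbOfFin hI) 0)
      rw [Matrix.updateRow_eq_self] at this
      rw [colDet, ← this, colDet]
      congr 1
      ext i j
      by_cases hi : i = 0
      · subst hi; simp
      · simp [Matrix.updateRow_ne hi]
    · rw [Pi.smul_apply, hA, minor_eq_zero_of_card_ne _ hI, minor_eq_zero_of_card_ne _ hI,
        smul_zero]

/-- The columns `s` and `t` are adjacent. -/
def AdjCols (s t : Fin n) : Prop := s.val + 1 = t.val ∨ t.val + 1 = s.val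

lemma AdjCols.ne {s t : Fin n} (h : AdjCols s t) : s ≠ t := by
  rintro rfl; rcases h with h | h <;> omega

lemma AdjCols.lt_iff {s t x : Fin n} (h : AdjCols s t) (hs : x ≠ s) (ht : x ≠ t) :
    x < s ↔ x < t := by
  rw [Fin.lt_def, Fin.lt_def]
  have := Fin.val_ne_iff.2 hs
  have := Fin.val_ne_iff.2 ht
  rcases h with h | h <;> omega

/-- The effect on minors of adding `c` times column `s` to the adjacent column `t`. -/
noncomputable def bridge (s t : Fin n) (c : ℝ) (p : Finset (Fin n) → ℝ) : Finset (Fin n) → ℝ :=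
  fun I => p I + if t ∈ I ∧ s ∉ I then c * p (insert s (I.erase t)) else 0

lemma IsMinorVector.bridge {p : Finset (Fin n) → ℝ} (hp : IsMinorVector k n p) {s t : Fin n}
    (hst : AdjCols s t) (c : ℝ) : IsMinorVector k n (bridge s t c p) := by
  obtain ⟨A, hA⟩ := hp
  refine ⟨A.updateCol t ((fun r => A r t) + c • fun r => A r s), fun I => ?_⟩
  unfold _root_.bridge
  by_cases hI : I.card = k
  swap
  · rw [hA, minor_eq_zero_of_card_ne _ hI, minor_eq_zero_of_card_ne _ hI]
    split_ifs with h
    · rw [hA, minor_eq_zero_of_card_ne _, mul_zero, add_zero]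
      rwa [Finset.card_insert_of_notMem (fun h' => h.2 (Finset.mem_of_mem_erase h')),
        Finset.card_erase_add_one h.1]
    · simp
  rw [hA, minor_of_card _ hI, minor_of_card _ hI]
  set g := I.orderEmbOfFin hI with hg
  have hgI : ∀ j, g j ∈ I := I.orderEmbOfFin_mem hI
  by_cases ht : t ∈ I
  swap
  · rw [if_neg (fun h => ht h.1), add_zero]
    unfold colDet
    congr 1
    ext i j
    have : g j ≠ t := fun h => ht (h ▸ hgI j)
    simp [Matrix.updateCol_ne this]
  obtain ⟨j, hj⟩ : ∃ j, g j = t := by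
    have : t ∈ Set.range g := by rw [hg, Finset.range_orderEmbOfFin]; exact ht
    exact this
  have h1 : colDet (A.updateCol t ((fun r => A r t) + c • fun r => A r s)) g =
      colDet A g + c * colDet A (Function.update g j s) := by
    rw [colDet_update, Matrix.cramer_apply, ← Matrix.det_updateCol_smul]
    have h0 : colDet A g = ((A.submatrix id g).updateCol j fun r => A r t).det := by
      rw [← Matrix.cramer_apply, ← colDet_update, ← hj, Function.update_eq_self]
    rw [h0, ← Matrix.det_updateCol_add, colDet]
    congr 1
    ext i l
    by_cases hl : l = j
    · subst hl; simp [hj]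
    · have : g l ≠ t := fun h => hl (g.injective (h.trans hj.symm))
      simp [Matrix.updateCol_ne this, hl]
  rw [h1]
  congr 1
  by_cases hs : s ∈ I
  · rw [if_neg (fun h => h.2 hs)]
    obtain ⟨l, hl⟩ : ∃ l, g l = s := by
      have : s ∈ Set.range g := by rw [hg, Finset.range_orderEmbOfFin]; exact hs
      exact this
    have hlj : l ≠ j := by rintro rfl; exact hst.ne (hl.symm.trans hj)
    rw [colDet_eq_zero_of_eq A hlj, mul_zero]
    rw [Function.update_of_ne hlj, Function.update_self, hl]
  · rw [if_pos ⟨ht, hs⟩, hA]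
    have hc : (insert s (I.erase t)).card = k := by
      rwa [Finset.card_insert_of_notMem (fun h' => hs (Finset.mem_of_mem_erase h')),
        Finset.card_erase_add_one ht]
    rw [minor_of_card _ hc]
    congr 2
    have hmem : ∀ l, l ≠ j → g l ≠ s ∧ g l ≠ t := fun l hl =>
      ⟨fun h => hs (h ▸ hgI l), fun h => hl (g.injective (h.trans hj.symm))⟩
    refine (Finset.orderEmbOfFin_unique hc (fun l => ?_) (fun l l' hll => ?_)).symm
    · by_cases hl : l = j
      · subst hl; simp
      · simp [hl, hgI l, (hmem l hl).2]
    · have hlt : g l < g l' := g.strictMono hll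
      by_cases hl : l = j <;> by_cases hl' : l' = j
      · subst hl; exact absurd (hl'.symm) hll.ne
      · subst hl
        obtain ⟨h1, h2⟩ := hmem l' hl'
        rw [Function.update_self, Function.update_of_ne hl']
        have := hst.lt_iff h1 h2
        rw [hj] at hlt
        exact lt_of_le_of_ne (not_lt.1 fun h => absurd (this.1 h) hlt.not_gt) h1.symm
      · subst hl'
        obtain ⟨h1, h2⟩ := hmem l hl
        rw [Function.update_self, Function.update_of_ne hl]
        rw [hj] at hlt
        exact (hst.lt_iff h1 h2).2 hlt
      · simpa [hl, hl'] using hlt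

end Pluecker

/-! ### Connectedness of positroid cells -/

section Connected

variable {k n : ℕ}

/-- A minimal-weight basis can be reached from any other one by weight-decreasing exchanges. -/
lemma exists_lower_exchange {α : Type*} [DecidableEq α] {𝓑 : Finset (Finset α)} {pos : α → ℤ}
    (hpos : Function.Injective pos)
    (hex : ∀ I ∈ 𝓑, ∀ I' ∈ 𝓑, ∀ i ∈ I, i ∉ I' → ∃ j ∈ I', j ∉ I ∧ insert j (I.erase i) ∈ 𝓑)
    {I J : Finset α} (hJ : J ∈ 𝓑) (hmin : ∀ I ∈ 𝓑, ∑ x ∈ J, pos x ≤ ∑ x ∈ I, pos x)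
    (hI : I ∈ 𝓑) (hne : I ≠ J) :
    ∃ i ∈ I, i ∉ J ∧ ∃ j ∈ J, j ∉ I ∧ pos j < pos i ∧ insert j (I.erase i) ∈ 𝓑 := by
  have hD : (symmDiff I J).Nonempty := by
    rw [Finset.nonempty_iff_ne_empty]
    intro h
    exact hne (symmDiff_eq_bot.1 h)
  obtain ⟨i, hi, hmax⟩ := Finset.exists_max_image _ pos hD
  have hlt : ∀ j ∈ symmDiff I J, j ≠ i → pos j < pos i := fun j hj hji =>
    lt_of_le_of_ne (hmax j hj) fun h => hji (hpos h)
  rcases Finset.mem_symmDiff.1 hi with ⟨hiI, hiJ⟩ | ⟨hiJ, hiI⟩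
  · obtain ⟨j, hjJ, hjI, hj⟩ := hex I hI J hJ i hiI hiJ
    exact ⟨i, hiI, hiJ, j, hjJ, hjI, hlt j (Finset.mem_symmDiff.2 (Or.inr ⟨hjJ, hjI⟩))
      (by rintro rfl; exact hiJ hjJ), hj⟩
  · obtain ⟨j, hjI, hjJ, hj⟩ := hex J hJ I hI i hiJ hiI
    have h1 := hlt j (Finset.mem_symmDiff.2 (Or.inl ⟨hjI, hjJ⟩)) (by rintro rfl; exact hiI hjI)
    have h2 := hmin _ hj
    rw [Finset.sum_insert fun h => hjJ (Finset.mem_of_mem_erase h)] at h2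
    have := Finset.add_sum_erase J pos hiJ
    omega

/-- Along weight-decreasing exchanges, two functions which decrease with the same equality cases
attain their minimum at the same bases. -/
lemma minimum_eq_iff_of_exchange {α : Type*} [DecidableEq α] {𝓑 : Finset (Finset α)} {pos : α → ℤ}
    (hpos : Function.Injective pos)
    (hex : ∀ I ∈ 𝓑, ∀ I' ∈ 𝓑, ∀ i ∈ I, i ∉ I' → ∃ j ∈ I', j ∉ I ∧ insert j (I.erase i) ∈ 𝓑)
    {J : Finset α} (hJ : J ∈ 𝓑) (hmin : ∀ I ∈ 𝓑, ∑ x ∈ J, pos x ≤ ∑ x ∈ I, pos x)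
    {f g : Finset α → ℝ}
    (hstep : ∀ I ∈ 𝓑, ∀ i ∈ I, ∀ j ∉ I, pos j < pos i → insert j (I.erase i) ∈ 𝓑 →
      f (insert j (I.erase i)) ≤ f I ∧ g (insert j (I.erase i)) ≤ g I ∧
        (f (insert j (I.erase i)) = f I ↔ g (insert j (I.erase i)) = g I)) :
    ∀ I ∈ 𝓑, f J ≤ f I ∧ g J ≤ g I ∧ (f J = f I ↔ g J = g I) := by
  suffices h : ∀ m, ∀ I ∈ 𝓑, (I \ J).card = m → f J ≤ f I ∧ g J ≤ g I ∧ (f J = f I ↔ g J = g I)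
    from fun I hI => h _ I hI rfl
  intro m
  induction m using Nat.strong_induction_on with
  | _ m ih =>
    intro I hI hm
    by_cases hne : I = J
    · subst hne; simp
    obtain ⟨i, hiI, hiJ, j, hjJ, hjI, hlt, hj⟩ := exists_lower_exchange hpos hex hJ hmin hI hne
    obtain ⟨h1, h2, h3⟩ := hstep I hI i hiI j hjI hlt hj
    have hlt : (insert j (I.erase i) \ J).card < m := by
      rw [← hm]
      refine Finset.card_lt_card (Finset.ssubset_iff_of_subset ?_ |>.2 ⟨i, ?_, ?_⟩)
      · intro x
        simp only [Finset.mem_sdiff, Finset.mem_insert, Finset.mem_erase]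
        rintro ⟨rfl | h, hx⟩
        · exact absurd hjJ hx
        · exact ⟨h.2, hx⟩
      · simp [hiI, hiJ]
      · have : i ≠ j := by rintro rfl; exact hiJ hjJ
        simp [this]
    obtain ⟨h4, h5, h6⟩ := ih _ hlt _ hj rfl
    refine ⟨h4.trans h1, h5.trans h2, ?_, ?_⟩
    · intro h
      have e1 : f J = f (insert j (I.erase i)) := le_antisymm h4 (h ▸ h1)
      have e2 : f (insert j (I.erase i)) = f I := e1.symm.trans h
      rw [h6.1 e1, h3.1 e2]
    · intro h
      have e1 : g J = g (insert j (I.erase i)) := le_antisymm h5 (h ▸ h2)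
      have e2 : g (insert j (I.erase i)) = g I := e1.symm.trans h
      rw [h6.2 e1, h3.2 e2]

/-- The cone over a positroid cell. -/
def cellCone (n k : ℕ) (𝓜 : Finset (Finset (Fin n))) : Set (Finset (Fin n) → ℝ) :=
  {p | IsMinorVector k n p ∧ ∀ I : Finset (Fin n), (I ∈ 𝓜 → 0 < p I) ∧ (I ∉ 𝓜 → p I = 0)}

lemma cellCone_ne_zero_iff {𝓜 : Finset (Finset (Fin n))} {p : Finset (Fin n) → ℝ}
    (hp : p ∈ cellCone n k 𝓜) {I : Finset (Fin n)} : p I ≠ 0 ↔ I ∈ 𝓜 := by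
  refine ⟨fun h => ?_, fun h => ((hp.2 I).1 h).ne'⟩
  by_contra h'
  exact h ((hp.2 I).2 h')

lemma cellCone_nonneg {𝓜 : Finset (Finset (Fin n))} {p : Finset (Fin n) → ℝ}
    (hp : p ∈ cellCone n k 𝓜) (I : Finset (Fin n)) : 0 ≤ p I := by
  by_cases h : I ∈ 𝓜
  · exact ((hp.2 I).1 h).le
  · exact ((hp.2 I).2 h).ge

/-- The cyclic order on columns starting after `t` in the direction from `s` to `t`. -/
def cycPos (s t x : Fin n) : ℤ :=
  if s < t then (if s < x then x.val else x.val + n) else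
    (if x < s then -x.val else n - x.val)

lemma cycPos_injective (s t : Fin n) : Function.Injective (cycPos s t) := by
  intro x y h
  have := x.2
  have := y.2
  unfold cycPos at h
  ext
  split_ifs at h <;> simp only [Fin.lt_def] at * <;> omega

lemma ordSign_mul_of_cycPos_lt {s t a b : Fin n} (hst : AdjCols s t) (has : a ≠ s) (hbs : b ≠ s)
    (h : cycPos s t a < cycPos s t b) :
    ordSign a s * ordSign b s * ordSign a b * ordSign s t = 1 := by
  have := a.2
  have := b.2
  have := Fin.val_ne_iff.2 has
  have := Fin.val_ne_iff.2 hbs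
  have := Fin.val_ne_iff.2 hst.ne
  unfold cycPos at h
  unfold ordSign
  split_ifs at h ⊢ <;> simp only [Fin.lt_def] at * <;> first | omega | norm_num

/-- Along an exchange towards the start of the cyclic order, the ratio of the minors through `t`
and through `s` decreases, with combinatorially determined equality cases. -/
lemma cellCone_ratio_le {𝓜 : Finset (Finset (Fin n))} {p : Finset (Fin n) → ℝ}
    (hp : p ∈ cellCone n k 𝓜) {s t : Fin n} (hst : AdjCols s t) {I : Finset (Fin n)} {i j : Fin n}
    (hs : s ∉ I) (ht : t ∉ I) (hi : i ∈ I) (hj : j ∉ I) (hjs : j ≠ s) (hjt : j ≠ t)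
    (hlt : cycPos s t j < cycPos s t i) (hI : insert s I ∈ 𝓜)
    (hI' : insert s (insert j (I.erase i)) ∈ 𝓜) :
    p (insert t (insert j (I.erase i))) / p (insert s (insert j (I.erase i))) ≤
        p (insert t I) / p (insert s I) ∧
      (p (insert t (insert j (I.erase i))) / p (insert s (insert j (I.erase i))) =
          p (insert t I) / p (insert s I) ↔
        ¬ (insert j I ∈ 𝓜 ∧ insert s (insert t (I.erase i)) ∈ 𝓜)) := by
  set S := I.erase i with hS
  have hIS : insert i S = I := Finset.insert_erase hi
  have his : i ≠ s := by rintro rfl; exact hs hi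
  have hit : i ≠ t := by rintro rfl; exact ht hi
  have hji : j ≠ i := by rintro rfl; exact hj hi
  have hpos1 := (hp.2 _).1 hI
  have hpos2 := (hp.2 _).1 hI'
  have hk : S.card + 2 = k := by
    have := hp.1.card_eq hpos1.ne'
    rw [Finset.card_insert_of_notMem hs] at this
    have : S.card + 1 = I.card := Finset.card_erase_add_one hi
    omega
  have hord : ∀ x, x ≠ s → x ≠ t → ordSign x t = ordSign x s := by
    intro x h1 h2
    unfold ordSign
    simp [hst.lt_iff h1 h2]
  have hnot : ∀ x, x ∉ I → x ∉ S := fun x hx h => hx (Finset.mem_of_mem_erase h)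
  have key := hp.1.three_term hk (hnot j hj) (Finset.notMem_erase i I) (hnot s hs) (hnot t ht) hji
    hjs hjt his hit hst.ne (hord j hjs hjt) (hord i his hit)
  rw [ordSign_mul_of_cycPos_lt hst hjs his hlt, one_mul, hIS] at key
  have hn := mul_nonneg (cellCone_nonneg hp (insert j I)) (cellCone_nonneg hp (insert s (insert t S)))
  rw [div_le_div_iff₀ hpos2 hpos1, div_eq_div_iff hpos2.ne' hpos1.ne']
  refine ⟨by linarith, ?_⟩
  rw [← cellCone_ne_zero_iff hp, ← cellCone_ne_zero_iff hp, ← mul_ne_zero_iff, not_not]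
  constructor <;> intro h <;> linarith

/-- The bases after adding a generic multiple of column `s` to column `t`. -/
def bridgeBases (s t : Fin n) (𝓜 : Finset (Finset (Fin n))) : Finset (Finset (Fin n)) :=
  Finset.univ.filter fun I => I ∈ 𝓜 ∨ ((t ∈ I ∧ s ∉ I) ∧ insert s (I.erase t) ∈ 𝓜)

lemma mem_bridgeBases {s t : Fin n} {𝓜 : Finset (Finset (Fin n))} {I : Finset (Fin n)} :
    I ∈ bridgeBases s t 𝓜 ↔ I ∈ 𝓜 ∨ ((t ∈ I ∧ s ∉ I) ∧ insert s (I.erase t) ∈ 𝓜) := by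
  simp [bridgeBases]

lemma cellCone_bridge_mem {𝓜 : Finset (Finset (Fin n))} {p : Finset (Fin n) → ℝ}
    (hp : p ∈ cellCone n k 𝓜) {s t : Fin n} (hst : AdjCols s t) {c : ℝ} (hc : 0 < c) :
    bridge s t c p ∈ cellCone n k (bridgeBases s t 𝓜) := by
  refine ⟨hp.1.bridge hst c, fun I => ?_⟩
  rw [mem_bridgeBases]
  unfold bridge
  have h0 := cellCone_nonneg hp I
  by_cases h : t ∈ I ∧ s ∉ I
  · rw [if_pos h]
    have h1 := cellCone_nonneg hp (insert s (I.erase t))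
    constructor
    · rintro (hI | hI)
      · have := (hp.2 I).1 hI
        positivity
      · have := (hp.2 _).1 hI.2
        positivity
    · intro hI
      push Not at hI
      rw [(hp.2 I).2 hI.1, (hp.2 _).2 (hI.2 h)]
      simp
  · rw [if_neg h, add_zero]
    constructor
    · rintro (hI | hI)
      · exact (hp.2 I).1 hI
      · exact absurd hI.1 h
    · intro hI
      exact (hp.2 I).2 fun h' => hI (Or.inl h')

lemma bridge_bridge_neg {s t : Fin n} (c : ℝ) (p : Finset (Fin n) → ℝ) :
    bridge s t c (bridge s t (-c) p) = p := by
  ext I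
  unfold bridge
  by_cases h : t ∈ I ∧ s ∉ I
  · simp [h]
  · simp [h]

lemma continuous_bridge (s t : Fin n) :
    Continuous fun x : ℝ × (Finset (Fin n) → ℝ) => bridge s t x.1 x.2 := by
  refine continuous_pi fun I => ?_
  unfold bridge
  by_cases h : t ∈ I ∧ s ∉ I
  · simp only [if_pos h]; fun_prop
  · simp only [if_neg h]; fun_prop

end Connected

section Hop

variable {k n : ℕ}

lemma insert_mem_bridgeBases {s t : Fin n} {𝓜 : Finset (Finset (Fin n))} {I : Finset (Fin n)} :
    insert s I ∈ bridgeBases s t 𝓜 ↔ insert s I ∈ 𝓜 := by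
  rw [mem_bridgeBases]
  simp

/-- Adding a generic multiple of column `s` to column `t` can be undone uniformly on the larger
cell. -/
lemma exists_bridge_section {𝓜 : Finset (Finset (Fin n))} {p₀ : Finset (Fin n) → ℝ}
    (hp₀ : p₀ ∈ cellCone n k 𝓜) {s t : Fin n} (hst : AdjCols s t)
    (hK : ∃ K ∈ bridgeBases s t 𝓜, K ∉ 𝓜) :
    ∃ J : Finset (Fin n), s ∉ J ∧ t ∉ J ∧ insert s J ∈ 𝓜 ∧ insert t J ∉ 𝓜 ∧
      ∀ q ∈ cellCone n k (bridgeBases s t 𝓜), 0 < q (insert s J) ∧ 0 < q (insert t J) ∧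
        bridge s t (-(q (insert t J) / q (insert s J))) q ∈ cellCone n k 𝓜 := by
  set 𝓑 : Finset (Finset (Fin n)) :=
    Finset.univ.filter fun I => s ∉ I ∧ t ∉ I ∧ insert s I ∈ 𝓜 with h𝓑
  have mem𝓑 : ∀ I, I ∈ 𝓑 ↔ s ∉ I ∧ t ∉ I ∧ insert s I ∈ 𝓜 := by simp [h𝓑]
  have hbr : ∀ I ∈ 𝓑, insert t I ∈ bridgeBases s t 𝓜 := by
    intro I hI
    obtain ⟨h1, h2, h3⟩ := (mem𝓑 I).1 hI
    rw [mem_bridgeBases]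
    right
    refine ⟨⟨Finset.mem_insert_self _ _, ?_⟩, ?_⟩
    · simp [hst.ne, h1]
    · rwa [Finset.erase_insert h2]
  have hex : ∀ I ∈ 𝓑, ∀ I' ∈ 𝓑, ∀ i ∈ I, i ∉ I' →
      ∃ j ∈ I', j ∉ I ∧ insert j (I.erase i) ∈ 𝓑 := by
    intro I hI I' hI' i hi hi'
    obtain ⟨h1, h2, h3⟩ := (mem𝓑 I).1 hI
    obtain ⟨h1', h2', h3'⟩ := (mem𝓑 I').1 hI'
    have his : i ≠ s := by rintro rfl; exact h1 hi
    obtain ⟨b, hb, hb', hb''⟩ := hp₀.1.exchange ((cellCone_ne_zero_iff hp₀).2 h3)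
      ((cellCone_ne_zero_iff hp₀).2 h3') (Finset.mem_insert_of_mem hi)
      (by simp [his, hi'] : i ∉ insert s I')
    rw [cellCone_ne_zero_iff hp₀] at hb''
    simp only [Finset.mem_insert, not_or] at hb hb'
    have hbI' := hb.resolve_left hb'.1
    refine ⟨b, hbI', hb'.2, (mem𝓑 _).2 ⟨?_, ?_, ?_⟩⟩
    · simp [Ne.symm hb'.1, h1]
    · have : t ≠ b := by rintro rfl; exact h2' hbI'
      simp [this, h2]
    · rwa [Finset.erase_insert_of_ne his.symm, Finset.insert_comm] at hb''
  obtain ⟨K, hK, hKM⟩ := hK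
  obtain ⟨⟨hKt, hKs⟩, hK'⟩ := ((mem_bridgeBases).1 hK).resolve_left hKM
  have hK𝓑 : K.erase t ∈ 𝓑 := (mem𝓑 _).2 ⟨by simp [hKs], by simp, hK'⟩
  obtain ⟨J, hJ, hmin⟩ := Finset.exists_min_image 𝓑 (fun I => ∑ x ∈ I, cycPos s t x) ⟨_, hK𝓑⟩
  have main : ∀ q ∈ cellCone n k (bridgeBases s t 𝓜), ∀ q' ∈ cellCone n k (bridgeBases s t 𝓜),
      ∀ I ∈ 𝓑, q (insert t J) / q (insert s J) ≤ q (insert t I) / q (insert s I) ∧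
        q' (insert t J) / q' (insert s J) ≤ q' (insert t I) / q' (insert s I) ∧
        (q (insert t J) / q (insert s J) = q (insert t I) / q (insert s I) ↔
          q' (insert t J) / q' (insert s J) = q' (insert t I) / q' (insert s I)) := by
    intro q hq q' hq'
    refine minimum_eq_iff_of_exchange (f := fun I => q (insert t I) / q (insert s I))
      (g := fun I => q' (insert t I) / q' (insert s I)) (cycPos_injective s t) hex hJ hmin ?_
    intro I hI i hi j hj hlt hI'
    obtain ⟨h1, h2, h3⟩ := (mem𝓑 I).1 hI
    obtain ⟨h1', h2', h3'⟩ := (mem𝓑 _).1 hI'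
    simp only [Finset.mem_insert, not_or] at h1' h2'
    have key : ∀ r ∈ cellCone n k (bridgeBases s t 𝓜), _ := fun r hr =>
      cellCone_ratio_le hr hst h1 h2 hi hj (Ne.symm h1'.1) (Ne.symm h2'.1) hlt
        (insert_mem_bridgeBases.2 h3) (insert_mem_bridgeBases.2 h3')
    obtain ⟨a1, a2⟩ := key q hq
    obtain ⟨b1, b2⟩ := key q' hq'
    exact ⟨a1, b1, a2.trans b2.symm⟩
  have hq₀ := cellCone_bridge_mem hp₀ hst one_pos
  have hρ : ∀ I ∈ 𝓑, bridge s t 1 p₀ (insert t I) / bridge s t 1 p₀ (insert s I) =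
      p₀ (insert t I) / p₀ (insert s I) + 1 := by
    intro I hI
    obtain ⟨h1, h2, h3⟩ := (mem𝓑 I).1 hI
    have := ((hp₀.2 _).1 h3).ne'
    unfold bridge
    rw [if_pos ⟨Finset.mem_insert_self _ _, by simp [hst.ne, h1]⟩, if_neg (by simp),
      Finset.erase_insert h2, add_zero, one_mul, add_div, div_self this]
  obtain ⟨hJs, hJt, hJM⟩ := (mem𝓑 J).1 hJ
  have hJ0 : p₀ (insert t J) = 0 := by
    have h1 := (main _ hq₀ _ hq₀ _ hK𝓑).1
    rw [hρ _ hK𝓑, hρ _ hJ, Finset.insert_erase hKt, (hp₀.2 K).2 hKM, zero_div] at h1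
    have h2 := (hp₀.2 _).1 hJM
    have h3 := cellCone_nonneg hp₀ (insert t J)
    have h4 : p₀ (insert t J) / p₀ (insert s J) ≤ 0 := by linarith
    rw [div_le_iff₀ h2, zero_mul] at h4
    exact le_antisymm h4 h3
  have hJt' : insert t J ∉ 𝓜 := fun h => ((hp₀.2 _).1 h).ne' hJ0
  refine ⟨J, hJs, hJt, hJM, hJt', fun q hq => ?_⟩
  refine ⟨(hq.2 _).1 (insert_mem_bridgeBases.2 hJM), (hq.2 _).1 (hbr J hJ), hq.1.bridge hst _,
    fun L => ?_⟩
  unfold bridge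
  by_cases hL : t ∈ L ∧ s ∉ L
  swap
  · rw [if_neg hL, add_zero]
    have : L ∈ bridgeBases s t 𝓜 ↔ L ∈ 𝓜 := by
      rw [mem_bridgeBases]; simp only [hL, false_and, or_false]
    rw [← this]
    exact hq.2 L
  rw [if_pos hL]
  by_cases hI : insert s (L.erase t) ∈ 𝓜
  swap
  · have : L ∈ bridgeBases s t 𝓜 ↔ L ∈ 𝓜 := by
      rw [mem_bridgeBases]; simp only [hI, and_false, or_false]
    rw [(hq.2 _).2 (fun h => hI (insert_mem_bridgeBases.1 h)), mul_zero, add_zero, ← this]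
    exact hq.2 L
  have hI𝓑 : L.erase t ∈ 𝓑 := (mem𝓑 _).2 ⟨by simp [hL.2], by simp, hI⟩
  have hpos := (hq.2 _).1 (insert_mem_bridgeBases.2 hI)
  obtain ⟨h1, -, h2⟩ := main _ hq _ hq₀ _ hI𝓑
  rw [hρ _ hI𝓑, hρ _ hJ, hJ0, Finset.insert_erase hL.1, zero_div, zero_add, eq_comm,
    eq_comm (a := (1 : ℝ)), add_eq_right, div_eq_zero_iff,
    or_iff_left ((hp₀.2 _).1 hI).ne'] at h2
  rw [Finset.insert_erase hL.1] at h1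
  rw [le_div_iff₀ hpos] at h1
  rw [div_eq_iff hpos.ne'] at h2
  constructor
  · intro hLM
    have h3 : p₀ L ≠ 0 := (cellCone_ne_zero_iff hp₀).2 hLM
    have : q L ≠ q (insert t J) / q (insert s J) * q (insert s (L.erase t)) := fun h => h3 (h2.1 h)
    have := lt_of_le_of_ne h1 this.symm
    linarith
  · intro hLM
    rw [h2.2 ((hp₀.2 _).2 hLM)]
    ring

/-- A cell is connected if its generic bridge extension is. -/
lemma isPreconnected_cellCone_bridgeBases {𝓜 : Finset (Finset (Fin n))}
    (hne : (cellCone n k 𝓜).Nonempty) {s t : Fin n} (hst : AdjCols s t)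
    (hK : ∃ K ∈ bridgeBases s t 𝓜, K ∉ 𝓜)
    (hc : IsPreconnected (cellCone n k (bridgeBases s t 𝓜))) :
    IsPreconnected (cellCone n k 𝓜) := by
  obtain ⟨p₀, hp₀⟩ := hne
  obtain ⟨J, hJs, hJt, hJM, hJt', hr⟩ := exists_bridge_section hp₀ hst hK
  have himg : cellCone n k 𝓜 = (fun q : Finset (Fin n) → ℝ =>
      bridge s t (-(q (insert t J) / q (insert s J))) q) '' cellCone n k (bridgeBases s t 𝓜) := by
    ext p
    constructor
    · intro hp
      refine ⟨_, cellCone_bridge_mem hp hst one_pos, ?_⟩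
      have h1 : bridge s t 1 p (insert t J) / bridge s t 1 p (insert s J) = 1 := by
        have := ((hp.2 _).1 hJM).ne'
        unfold bridge
        rw [if_pos ⟨Finset.mem_insert_self _ _, by simp [hst.ne, hJs]⟩, if_neg (by simp),
          Finset.erase_insert hJt, (hp.2 _).2 hJt']
        simp [this]
      have h2 := bridge_bridge_neg (s := s) (t := t) (-1) p
      simp only [neg_neg] at h2
      simp only [h1, h2]
    · rintro ⟨q, hq, rfl⟩
      exact (hr q hq).2.2
  rw [himg]
  refine hc.image _ ?_
  refine (continuous_bridge s t).comp_continuousOn (ContinuousOn.prodMk ?_ continuousOn_id)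
  refine ((continuous_apply (insert t J)).continuousOn.div (continuous_apply (insert s J)).continuousOn ?_).neg
  exact fun q hq => (hr q hq).1.ne'

/-- The generic bridge extension of a connected cell is connected. -/
lemma isPreconnected_bridgeBases_cellCone {𝓜 : Finset (Finset (Fin n))}
    (hne : (cellCone n k 𝓜).Nonempty) {s t : Fin n} (hst : AdjCols s t)
    (hK : ∃ K ∈ bridgeBases s t 𝓜, K ∉ 𝓜) (hc : IsPreconnected (cellCone n k 𝓜)) :
    IsPreconnected (cellCone n k (bridgeBases s t 𝓜)) := by
  obtain ⟨p₀, hp₀⟩ := hne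
  obtain ⟨J, hJs, hJt, hJM, hJt', hr⟩ := exists_bridge_section hp₀ hst hK
  have himg : cellCone n k (bridgeBases s t 𝓜) =
      (fun x : ℝ × (Finset (Fin n) → ℝ) => bridge s t x.1 x.2) ''
        (Set.Ioi 0 ×ˢ cellCone n k 𝓜) := by
    ext q
    constructor
    · intro hq
      obtain ⟨h1, h2, h3⟩ := hr q hq
      exact ⟨(_, _), ⟨div_pos h2 h1, h3⟩, bridge_bridge_neg _ _⟩
    · rintro ⟨⟨c, p⟩, ⟨hc, hp⟩, rfl⟩
      exact cellCone_bridge_mem hp hst hc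
  rw [himg]
  exact (isPreconnected_Ioi.prod hc).image _ (continuous_bridge s t).continuousOn

end Hop

section Connectivity

variable {k n : ℕ}

/-- A family of sets closed under moving one element to an adjacent free position contains all
sets of the given cardinality or none. -/
lemma mem_of_adjacent_hops {𝓜 : Finset (Finset (Fin n))}
    (hop : ∀ I ∈ 𝓜, ∀ s ∈ I, ∀ t ∉ I, AdjCols s t → insert t (I.erase s) ∈ 𝓜)
    {I L : Finset (Fin n)} (hI : I ∈ 𝓜) (hL : L.card = I.card) : L ∈ 𝓜 := by
  suffices h : ∀ w, ∀ I : Finset (Fin n), ∑ x ∈ I, x.val = w →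
      (I ∈ 𝓜 ↔ Finset.univ.filter (fun x : Fin n => x.val < I.card) ∈ 𝓜) by
    rw [h _ L rfl, hL, ← h _ I rfl]; exact hI
  intro w
  induction w using Nat.strong_induction_on with
  | _ w ih =>
    intro I hw
    by_cases hdown : ∀ s ∈ I, ∀ t : Fin n, t.val + 1 = s.val → t ∈ I
    · have hlow : ∀ m, ∀ s ∈ I, ∀ t : Fin n, t.val + m = s.val → t ∈ I := by
        intro m
        induction m with
        | zero => intro s hs t h; rwa [Fin.ext h]
        | succ m ihm =>
          intro s hs t h
          have := s.2
          exact hdown ⟨t.val + 1, by omega⟩ (ihm s hs _ (by simp only; omega)) t rfl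
      have : I = Finset.univ.filter (fun x : Fin n => x.val < I.card) := by
        refine Finset.eq_of_subset_of_card_le (fun x hx => ?_) ?_
        · have h1 : Finset.Iic x ⊆ I := fun y hy => by
            have : y ≤ x := by simpa using hy
            have : y.val ≤ x.val := this
            exact hlow (x.val - y.val) x hx y (by omega)
          have h2 := Finset.card_le_card h1
          rw [Fin.card_Iic] at h2
          simp only [Finset.mem_filter, Finset.mem_univ, true_and]
          omega
        · rw [Fin.card_filter_val_lt]
          exact min_le_right _ _
      rw [← this]
    · push Not at hdown
      obtain ⟨s, hs, t, hts, ht⟩ := hdown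
      have hst : t ≠ s := by rintro rfl; exact ht hs
      have hte : t ∉ I.erase s := fun h => ht (Finset.mem_of_mem_erase h)
      have hback : insert s ((insert t (I.erase s)).erase t) = I := by
        rw [Finset.erase_insert hte, Finset.insert_erase hs]
      have h1 : I ∈ 𝓜 ↔ insert t (I.erase s) ∈ 𝓜 := by
        refine ⟨fun h => hop I h s hs t ht (Or.inr hts), fun h => ?_⟩
        have := hop _ h t (Finset.mem_insert_self _ _) s (by simp [hst.symm]) (Or.inl hts)
        rwa [hback] at this
      have h2 : (insert t (I.erase s)).card = I.card := by
        rw [Finset.card_insert_of_notMem hte, Finset.card_erase_add_one hs]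
      have h3 : ∑ x ∈ insert t (I.erase s), x.val < w := by
        rw [Finset.sum_insert hte, ← hw, ← Finset.add_sum_erase I _ hs]
        omega
      rw [h1, ih _ h3 _ rfl, h2]

lemma isPreconnected_cellCone_iff (n k : ℕ) (𝓜 : Finset (Finset (Fin n)))
    (hne : (cellCone n k 𝓜).Nonempty) (h𝓜 : 𝓜.Nonempty) :
    IsPreconnected (cellCone n k 𝓜) ↔
      IsPreconnected (cellCone n k (Finset.univ.filter fun I : Finset (Fin n) => I.card = k)) := by
  induction hm : (Finset.univ \ 𝓜).card using Nat.strong_induction_on generalizing 𝓜 with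
  | _ m ih =>
    obtain ⟨p, hp⟩ := hne
    have hcard : ∀ I ∈ 𝓜, I.card = k := fun I hI => hp.1.card_eq ((cellCone_ne_zero_iff hp).2 hI)
    by_cases hop : ∀ I ∈ 𝓜, ∀ s ∈ I, ∀ t ∉ I, AdjCols s t → insert t (I.erase s) ∈ 𝓜
    · obtain ⟨I, hI⟩ := h𝓜
      have : 𝓜 = Finset.univ.filter fun I : Finset (Fin n) => I.card = k := by
        ext L
        simp only [Finset.mem_filter, Finset.mem_univ, true_and]
        exact ⟨hcard L, fun hL => mem_of_adjacent_hops hop hI (hL.trans (hcard I hI).symm)⟩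
      rw [← this]
    · push Not at hop
      obtain ⟨I, hI, s, hs, t, ht, hst, hK⟩ := hop
      have hte : t ∉ I.erase s := fun h => ht (Finset.mem_of_mem_erase h)
      have hmem : insert t (I.erase s) ∈ bridgeBases s t 𝓜 := by
        rw [mem_bridgeBases, Finset.erase_insert hte, Finset.insert_erase hs]
        exact Or.inr ⟨⟨Finset.mem_insert_self _ _, by simp [hst.ne]⟩, hI⟩
      have hsub : 𝓜 ⊆ bridgeBases s t 𝓜 := fun L hL => mem_bridgeBases.2 (Or.inl hL)
      have hlt : (Finset.univ \ bridgeBases s t 𝓜).card < m := by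
        rw [← hm]
        refine Finset.card_lt_card ((Finset.ssubset_iff_of_subset
          (Finset.sdiff_subset_sdiff le_rfl hsub)).2 ⟨insert t (I.erase s), ?_, ?_⟩)
        · simp [hK]
        · simp [hmem]
      rw [← ih _ hlt _ ⟨_, cellCone_bridge_mem hp hst one_pos⟩ (h𝓜.mono hsub) rfl]
      exact ⟨isPreconnected_bridgeBases_cellCone ⟨p, hp⟩ hst ⟨_, hmem, hK⟩,
        isPreconnected_cellCone_bridgeBases ⟨p, hp⟩ hst ⟨_, hmem, hK⟩⟩

/-- The only Plücker vector for `k = 0`. -/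
lemma IsMinorVector.eq_single_of_zero {p : Finset (Fin n) → ℝ} (hp : IsMinorVector 0 n p) :
    p = Pi.single ∅ 1 := by
  obtain ⟨A, hA⟩ := hp
  ext I
  rw [hA]
  by_cases hI : I = ∅
  · subst hI
    rw [minor_of_card A rfl, Pi.single_eq_same, colDet, Matrix.det_isEmpty]
  · rw [Pi.single_eq_of_ne hI, minor_eq_zero_of_card_ne]
    simpa using hI

lemma cellCone_singleton {𝓜 : Finset (Finset (Fin n))} (hp : (cellCone n k 𝓜).Nonempty) {I₀ : Finset (Fin n)} (hI₀ : I₀ ∈ 𝓜) :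
    (cellCone n k {I₀}).Nonempty := by
  obtain ⟨p, hp⟩ := hp
  refine ⟨_, hp.1.torus (fun i => if i ∈ I₀ then 1 else 0), fun I => ?_⟩
  have hpos := (hp.2 _).1 hI₀
  rw [Finset.mem_singleton]
  constructor
  · rintro rfl
    rw [Finset.prod_congr rfl (g := fun _ => (1 : ℝ)) fun i hi => by simp [hi]]
    simpa using hpos
  · intro hI
    by_cases hsub : I ⊆ I₀
    · have hpI : p I = 0 := by
        by_contra h
        exact hI (Finset.eq_of_subset_of_card_le hsub
          (by rw [hp.1.card_eq h, hp.1.card_eq hpos.ne']))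
      rw [hpI, mul_zero]
    · obtain ⟨i, hi, hi'⟩ := Finset.not_subset.1 hsub
      rw [Finset.prod_eq_zero hi (by simp [hi']), zero_mul]

lemma isPreconnected_cellCone_singleton (n k : ℕ) (I₀ : Finset (Fin n)) :
    IsPreconnected (cellCone n k {I₀}) := by
  rcases k with _ | k
  · exact Set.Subsingleton.isPreconnected fun p hp q hq => by
      rw [hp.1.eq_single_of_zero, hq.1.eq_single_of_zero]
  · rcases (cellCone n (k + 1) {I₀}).eq_empty_or_nonempty with h | ⟨p, hp⟩
    · rw [h]; exact isPreconnected_empty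
    have himg : cellCone n (k + 1) {I₀} = (fun c : ℝ => c • p) '' Set.Ioi 0 := by
      have hpos : 0 < p I₀ := (hp.2 _).1 (Finset.mem_singleton_self _)
      ext q
      constructor
      · intro hq
        have hqpos : 0 < q I₀ := (hq.2 _).1 (Finset.mem_singleton_self _)
        refine ⟨q I₀ / p I₀, div_pos hqpos hpos, ?_⟩
        ext I
        by_cases hI : I = I₀
        · subst hI; simp [hpos.ne']
        · simp [(hp.2 I).2 (by simpa using hI), (hq.2 I).2 (by simpa using hI)]
      · rintro ⟨c, hc, rfl⟩
        refine ⟨hp.1.smul c (by simp), fun I => ⟨fun hI => ?_, fun hI => ?_⟩⟩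
        · exact mul_pos hc ((hp.2 I).1 hI)
        · simp [(hp.2 I).2 hI]
    rw [himg]
    exact isPreconnected_Ioi.image _ (by fun_prop)

lemma isPreconnected_cellCone {𝓜 : Finset (Finset (Fin n))} : IsPreconnected (cellCone n k 𝓜) := by
  rcases (cellCone n k 𝓜).eq_empty_or_nonempty with h | hne
  · rw [h]; exact isPreconnected_empty
  rcases 𝓜.eq_empty_or_nonempty with rfl | ⟨I₀, hI₀⟩
  · refine Set.Subsingleton.isPreconnected fun p hp q hq => ?_
    ext I
    rw [(hp.2 I).2 (by simp), (hq.2 I).2 (by simp)]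
  · rw [isPreconnected_cellCone_iff n k 𝓜 hne ⟨I₀, hI₀⟩,
      ← isPreconnected_cellCone_iff n k {I₀} (cellCone_singleton hne hI₀) (by simp)]
    exact isPreconnected_cellCone_singleton n k I₀

/-- Normalization of Plücker vectors. -/
noncomputable def unitPluecker (p : Finset (Fin n) → ℝ) : Finset (Fin n) → ℝ :=
  (√(∑ I, p I ^ 2))⁻¹ • p

lemma sum_sq_pos_of_mem_cellCone {𝓜 : Finset (Finset (Fin n))} (h𝓜 : 𝓜.Nonempty)
    {p : Finset (Fin n) → ℝ} (hp : p ∈ cellCone n k 𝓜) : 0 < ∑ I, p I ^ 2 := by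
  obtain ⟨I, hI⟩ := h𝓜
  exact Finset.sum_pos' (fun _ _ => sq_nonneg _)
    ⟨I, Finset.mem_univ _, pow_pos ((hp.2 I).1 hI) 2⟩

lemma unitPluecker_mem {𝓜 : Finset (Finset (Fin n))} (h𝓜 : 𝓜.Nonempty) {p : Finset (Fin n) → ℝ}
    (hp : p ∈ cellCone n k 𝓜) : unitPluecker p ∈ positroidCell n k 𝓜 := by
  have hpos := sum_sq_pos_of_mem_cellCone h𝓜 hp
  refine ⟨hp.1.smul _ ?_, ?_, fun I => ⟨fun hI => ?_, fun hI => ?_⟩⟩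
  · rintro rfl
    rw [hp.1.eq_single_of_zero]
    simp [Pi.single_apply]
  · simp only [unitPluecker, Pi.smul_apply, smul_eq_mul, mul_pow, ← Finset.mul_sum]
    rw [inv_pow, Real.sq_sqrt hpos.le, inv_mul_cancel₀ hpos.ne']
  · exact mul_pos (inv_pos.2 (Real.sqrt_pos.2 hpos)) ((hp.2 I).1 hI)
  · simp [unitPluecker, (hp.2 I).2 hI]

lemma positroidCell_subset_cellCone {𝓜 : Finset (Finset (Fin n))} :
    positroidCell n k 𝓜 ⊆ cellCone n k 𝓜 := fun _ hp => ⟨hp.1, hp.2.2⟩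

lemma nonempty_of_mem_positroidCell {𝓜 : Finset (Finset (Fin n))} {p : Finset (Fin n) → ℝ}
    (hp : p ∈ positroidCell n k 𝓜) : 𝓜.Nonempty := by
  by_contra h
  have := hp.2.1
  rw [Finset.sum_eq_zero fun I _ => by
    rw [(hp.2.2 I).2 fun hI => h ⟨I, hI⟩, zero_pow two_ne_zero]] at this
  exact zero_ne_one this

/-- Positroid cells are connected. -/
lemma isPreconnected_positroidCell {𝓜 : Finset (Finset (Fin n))} :
    IsPreconnected (positroidCell n k 𝓜) := by
  rcases (positroidCell n k 𝓜).eq_empty_or_nonempty with h | ⟨p₀, hp₀⟩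
  · rw [h]; exact isPreconnected_empty
  have h𝓜 := nonempty_of_mem_positroidCell hp₀
  have himg : positroidCell n k 𝓜 = unitPluecker '' cellCone n k 𝓜 := by
    refine Set.Subset.antisymm (fun p hp => ⟨p, positroidCell_subset_cellCone hp, ?_⟩) ?_
    · rw [unitPluecker, hp.2.1]; simp
    · rintro _ ⟨p, hp, rfl⟩
      exact unitPluecker_mem h𝓜 hp
  rw [himg]
  refine isPreconnected_cellCone.image _ ?_
  have hc : Continuous fun p : Finset (Fin n) → ℝ => √(∑ I, p I ^ 2) := by fun_prop
  exact (hc.continuousOn.inv₀ fun p hp =>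
    (Real.sqrt_pos.2 (sum_sq_pos_of_mem_cellCone h𝓜 hp)).ne').smul continuousOn_id

end Connectivity

/-! ### Torus orbits and the moment map -/

section Birch

lemma mul_exp_sub_mul_ge {a u : ℝ} (ha : 0 < a) (hu : 0 < u) (x : ℝ) :
    u * |x| - |2 * u - 2 * u * Real.log (2 * u / a)| ≤ a * Real.exp x - u * x := by
  have h2u : 0 < 2 * u / a := by positivity
  rcases le_total x 0 with hx | hx
  · rw [abs_of_nonpos hx]
    have := Real.exp_pos x
    have := abs_nonneg (2 * u - 2 * u * Real.log (2 * u / a))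
    nlinarith
  · rw [abs_of_nonneg hx]
    have h1 := Real.add_one_le_exp (x - Real.log (2 * u / a))
    rw [Real.exp_sub, Real.exp_log h2u, le_div_iff₀ h2u] at h1
    have h2 : a * ((x - Real.log (2 * u / a) + 1) * (2 * u / a)) ≤ a * Real.exp x :=
      mul_le_mul_of_nonneg_left h1 ha.le
    have h3 : a * ((x - Real.log (2 * u / a) + 1) * (2 * u / a)) =
        (x - Real.log (2 * u / a) + 1) * (2 * u) := by field_simp
    have := neg_abs_le (2 * u - 2 * u * Real.log (2 * u / a))
    nlinarith

/-- Existence part of Birch's theorem. -/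
lemma exists_birch_point {ι : Type*} [Fintype ι] {a u : ι → ℝ} (ha : ∀ i, 0 < a i)
    (hu : ∀ i, 0 < u i) (L : Submodule ℝ (ι → ℝ)) :
    ∃ s ∈ L, ∀ l ∈ L, ∑ i, (a i * Real.exp (s i) - u i) * l i = 0 := by
  set G : (ι → ℝ) → ℝ := fun s => ∑ i, (a i * Real.exp (s i) - u i * s i) with hG
  set C : ι → ℝ := fun i => |2 * u i - 2 * u i * Real.log (2 * u i / a i)| with hC
  have hlow : ∀ s, ∑ i, (u i * |s i| - C i) ≤ G s := fun s =>
    Finset.sum_le_sum fun i _ => mul_exp_sub_mul_ge (ha i) (hu i) (s i)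
  have hGc : Continuous G := by
    simp only [hG]; fun_prop
  have hcont : Continuous fun s : L => G s := hGc.comp continuous_subtype_val
  obtain ⟨s, hs⟩ := hcont.exists_forall_le_of_isBounded 0 (by
    rw [isBounded_iff_forall_norm_le]
    refine ⟨∑ i, (G 0 + ∑ j, C j) / u i, fun s hs => ?_⟩
    have hs : G s ≤ G 0 := hs
    have h1 : ∑ i, u i * |(s : ι → ℝ) i| ≤ G 0 + ∑ j, C j := by
      have := hlow s
      rw [Finset.sum_sub_distrib] at this
      linarith
    have h0 : 0 ≤ G 0 + ∑ j, C j := le_trans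
      (Finset.sum_nonneg fun i _ => mul_nonneg (hu i).le (abs_nonneg _)) h1
    rw [Submodule.coe_norm, pi_norm_le_iff_of_nonneg
      (Finset.sum_nonneg fun i _ => div_nonneg h0 (hu i).le)]
    intro i
    refine le_trans ?_ (Finset.single_le_sum (f := fun i => (G 0 + ∑ j, C j) / u i)
      (fun i _ => div_nonneg h0 (hu i).le) (Finset.mem_univ i))
    rw [le_div_iff₀ (hu i), Real.norm_eq_abs, mul_comm]
    exact le_trans (Finset.single_le_sum (f := fun i => u i * |(s : ι → ℝ) i|)
      (fun i _ => mul_nonneg (hu i).le (abs_nonneg _)) (Finset.mem_univ i)) h1)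
  refine ⟨s, s.2, fun l hl => ?_⟩
  have hmin : IsLocalMin (fun t : ℝ => G ((s : ι → ℝ) + t • l)) 0 := by
    refine Filter.Eventually.of_forall fun t => ?_
    have := hs (s + t • ⟨l, hl⟩)
    simpa using this
  refine hmin.hasDerivAt_eq_zero ?_
  simp only [hG, Pi.add_apply, Pi.smul_apply, smul_eq_mul]
  refine HasDerivAt.fun_sum fun i _ => ?_
  have h1 : HasDerivAt (fun t : ℝ => (s : ι → ℝ) i + t * l i) (l i) 0 := by
    simpa using ((hasDerivAt_id (0 : ℝ)).mul_const (l i)).const_add ((s : ι → ℝ) i)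
  have h2 := (h1.exp.const_mul (a i)).sub (h1.const_mul (u i))
  rw [zero_mul, add_zero] at h2
  rw [sub_mul, mul_assoc]
  exact h2

end Birch

section Moment

variable {k n : ℕ} {𝓜 : Finset (Finset (Fin n))}

/-- The action of the positive torus on Plücker vectors. -/
noncomputable def torusOrbit (p : Finset (Fin n) → ℝ) (θ : Fin n → ℝ) : Finset (Fin n) → ℝ :=
  unitPluecker fun I => Real.exp (∑ i ∈ I, θ i) * p I

lemma torusOrbit_mem {p : Finset (Fin n) → ℝ} (hp : p ∈ positroidCell n k 𝓜) (θ : Fin n → ℝ) :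
    torusOrbit p θ ∈ positroidCell n k 𝓜 := by
  refine unitPluecker_mem (nonempty_of_mem_positroidCell hp) ⟨?_, fun I => ⟨fun hI => ?_, fun hI => ?_⟩⟩
  · simp_rw [Real.exp_sum]
    exact IsMinorVector.torus hp.1 _
  · exact mul_pos (Real.exp_pos _) ((hp.2.2 I).1 hI)
  · simp [(hp.2.2 I).2 hI]

lemma sum_exp_sq_pos {p : Finset (Fin n) → ℝ} (hp : p ∈ positroidCell n k 𝓜)
    (r : Finset (Fin n) → ℝ) : 0 < ∑ I, (Real.exp (r I) * p I) ^ 2 := by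
  obtain ⟨I, hI⟩ := nonempty_of_mem_positroidCell hp
  exact Finset.sum_pos' (fun _ _ => sq_nonneg _)
    ⟨I, Finset.mem_univ _, pow_pos (mul_pos (Real.exp_pos _) ((hp.2.2 I).1 hI)) 2⟩

lemma log_torusOrbit {p : Finset (Fin n) → ℝ} (hp : p ∈ positroidCell n k 𝓜) (θ : Fin n → ℝ) :
    ∃ d : ℝ, ∀ I ∈ 𝓜, Real.log (torusOrbit p θ I) = Real.log (p I) + (∑ i ∈ I, θ i + d) := by
  have hpos := sum_exp_sq_pos hp fun I => ∑ i ∈ I, θ i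
  refine ⟨Real.log (√(∑ I, (Real.exp (∑ i ∈ I, θ i) * p I) ^ 2))⁻¹, fun I hI => ?_⟩
  have h1 := (hp.2.2 I).1 hI
  have h2 := Real.exp_pos (∑ i ∈ I, θ i)
  have h3 := inv_pos.2 (Real.sqrt_pos.2 hpos)
  rw [torusOrbit, unitPluecker, Pi.smul_apply, smul_eq_mul, Real.log_mul h3.ne' (mul_pos h2 h1).ne',
    Real.log_mul h2.ne' h1.ne', Real.log_exp]
  ring

lemma torusOrbit_sq_of_exp_sum_eq_one {p : Finset (Fin n) → ℝ} {θ : Fin n → ℝ} {d : ℝ}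
    (h : ∑ I, p I ^ 2 * Real.exp (∑ i ∈ I, θ i + d) = 1) (I : Finset (Fin n)) :
    torusOrbit p ((1 / 2 : ℝ) • θ) I ^ 2 = p I ^ 2 * Real.exp (∑ i ∈ I, θ i + d) := by
  have hsq : ∀ I : Finset (Fin n), (Real.exp (∑ i ∈ I, ((1 / 2 : ℝ) • θ) i) * p I) ^ 2 =
      p I ^ 2 * Real.exp (∑ i ∈ I, θ i + d) * Real.exp (-d) := by
    intro I
    rw [mul_pow, ← Real.exp_nat_mul, mul_assoc, ← Real.exp_add, mul_comm]
    congr 2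
    simp only [Pi.smul_apply, smul_eq_mul, ← Finset.mul_sum]
    push_cast
    ring
  have hsum : ∑ I : Finset (Fin n), (Real.exp (∑ i ∈ I, ((1 / 2 : ℝ) • θ) i) * p I) ^ 2 =
      Real.exp (-d) := by
    simp_rw [hsq]
    rw [← Finset.sum_mul, h, one_mul]
  rw [torusOrbit, unitPluecker, Pi.smul_apply, smul_eq_mul, mul_pow, hsum, hsq, inv_pow,
    Real.sq_sqrt (Real.exp_pos _).le]
  field_simp

/-- The convex combinations of the vertices of the matroid polytope with positive weights. -/
def openPolytope (n : ℕ) (𝓜 : Finset (Finset (Fin n))) : Set (Fin n → ℝ) :=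
  {x | ∃ u : Finset (Fin n) → ℝ, (∀ I ∈ 𝓜, 0 < u I) ∧ ∑ I ∈ 𝓜, u I = 1 ∧
    x = ∑ I ∈ 𝓜, u I • ind n I}

lemma momentMap_eq_sum {p : Finset (Fin n) → ℝ} (hp : ∀ I ∉ 𝓜, p I = 0) :
    momentMap n p = ∑ I ∈ 𝓜, p I ^ 2 • ind n I := by
  ext i
  rw [Finset.sum_apply, momentMap]
  symm
  refine Finset.sum_subset_zero_on_sdiff (Finset.subset_univ _) (fun I hI => ?_) fun I _ => ?_
  · rw [hp I (by simpa using hI)]; simp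
  · simp [ind]

lemma sum_sq_eq_sum {p : Finset (Fin n) → ℝ} (hp : ∀ I ∉ 𝓜, p I = 0) :
    ∑ I, p I ^ 2 = ∑ I ∈ 𝓜, p I ^ 2 := by
  symm
  refine Finset.sum_subset_zero_on_sdiff (Finset.subset_univ _) (fun I hI => ?_) fun I _ => rfl
  rw [hp I (by simpa using hI)]; simp

lemma momentMap_mem_openPolytope {p : Finset (Fin n) → ℝ} (hp : p ∈ positroidCell n k 𝓜) :
    momentMap n p ∈ openPolytope n 𝓜 := by
  have h0 : ∀ I ∉ 𝓜, p I = 0 := fun I hI => (hp.2.2 I).2 hI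
  exact ⟨fun I => p I ^ 2, fun I hI => pow_pos ((hp.2.2 I).1 hI) 2,
    by rw [← sum_sq_eq_sum h0]; exact hp.2.1, momentMap_eq_sum h0⟩

/-- Every torus orbit maps onto the open polytope. -/
lemma exists_momentMap_torusOrbit_eq {p : Finset (Fin n) → ℝ} (hp : p ∈ positroidCell n k 𝓜)
    {x : Fin n → ℝ} (hx : x ∈ openPolytope n 𝓜) : ∃ θ, momentMap n (torusOrbit p θ) = x := by
  obtain ⟨u, hu, hu1, rfl⟩ := hx
  set T : ((Fin n → ℝ) × ℝ) →ₗ[ℝ] (𝓜 → ℝ) :=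
    { toFun := fun y I => ∑ i ∈ I.1, y.1 i + y.2
      map_add' := by
        intro y z; ext I
        simp only [Prod.fst_add, Prod.snd_add, Pi.add_apply, Finset.sum_add_distrib]
        ring
      map_smul' := by
        intro c y; ext I
        simp [Finset.mul_sum, mul_add] } with hT
  obtain ⟨s, ⟨⟨θ, d⟩, rfl⟩, hs⟩ := exists_birch_point (a := fun I : 𝓜 => p I.1 ^ 2)
    (u := fun I : 𝓜 => u I.1) (fun I => pow_pos ((hp.2.2 I.1).1 I.2) 2) (fun I => hu I.1 I.2)
    (LinearMap.range T)
  have hs' : ∀ (η : Fin n → ℝ) (e : ℝ), ∑ I ∈ 𝓜, (p I ^ 2 * Real.exp (∑ i ∈ I, θ i + d) - u I) *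
      (∑ i ∈ I, η i + e) = 0 := by
    intro η e
    rw [← Finset.sum_coe_sort]
    exact hs _ ⟨(η, e), rfl⟩
  have h1 : ∑ I ∈ 𝓜, p I ^ 2 * Real.exp (∑ i ∈ I, θ i + d) = 1 := by
    have := hs' 0 1
    simp only [Pi.zero_apply, Finset.sum_const_zero, zero_add, mul_one, Finset.sum_sub_distrib] at this
    linarith
  have h0 : ∀ I ∉ 𝓜, p I = 0 := fun I hI => (hp.2.2 I).2 hI
  have h1' : ∑ I, p I ^ 2 * Real.exp (∑ i ∈ I, θ i + d) = 1 := by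
    rw [← h1]
    symm
    refine Finset.sum_subset_zero_on_sdiff (Finset.subset_univ _) (fun I hI => ?_) fun I _ => rfl
    rw [h0 I (by simpa using hI)]; simp
  refine ⟨(1 / 2 : ℝ) • θ, ?_⟩
  have hm := torusOrbit_mem hp ((1 / 2 : ℝ) • θ)
  rw [momentMap_eq_sum (𝓜 := 𝓜) fun I hI => (hm.2.2 I).2 hI]
  simp_rw [torusOrbit_sq_of_exp_sum_eq_one h1']
  ext j
  have := hs' (Pi.single j 1) 0
  simp only [add_zero, sub_mul, Finset.sum_sub_distrib] at this
  have hind : ∀ I : Finset (Fin n), ∑ i ∈ I, (Pi.single j 1 : Fin n → ℝ) i = ind n I j := by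
    intro I; simp [ind, Pi.single_apply]
  simp_rw [hind] at this
  simp only [Finset.sum_apply, Pi.smul_apply, smul_eq_mul]
  linarith

end Moment

/-! ### The matroid polytope -/

section Polytope

variable {k n : ℕ} {𝓜 : Finset (Finset (Fin n))}

lemma convex_openPolytope : Convex ℝ (openPolytope n 𝓜) := by
  rintro _ ⟨u, hu, hu1, rfl⟩ _ ⟨v, hv, hv1, rfl⟩ a b ha hb hab
  refine ⟨fun I => a * u I + b * v I, fun I hI => ?_, ?_, ?_⟩
  · have h1 := hu I hI
    have h2 := hv I hI
    rcases ha.eq_or_lt with rfl | ha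
    · have : b = 1 := by linarith
      simpa [this] using h2
    · positivity
  · rw [Finset.sum_add_distrib, ← Finset.mul_sum, ← Finset.mul_sum, hu1, hv1]
    linarith
  · simp only [Finset.smul_sum, smul_smul, add_smul, Finset.sum_add_distrib]

lemma nonempty_openPolytope (h𝓜 : 𝓜.Nonempty) : (openPolytope n 𝓜).Nonempty := by
  have : (0 : ℝ) < 𝓜.card := by exact_mod_cast h𝓜.card_pos
  refine ⟨_, fun _ => (𝓜.card : ℝ)⁻¹, fun I _ => inv_pos.2 this, ?_, rfl⟩
  rw [Finset.sum_const, nsmul_eq_mul, mul_inv_cancel₀ this.ne']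

lemma openPolytope_subset : openPolytope n 𝓜 ⊆ convexHull ℝ (ind n '' ↑𝓜) := by
  rintro _ ⟨u, hu, hu1, rfl⟩
  exact (convex_convexHull ℝ _).sum_mem (fun I hI => (hu I hI).le) hu1
    fun I hI => subset_convexHull ℝ _ ⟨I, hI, rfl⟩

lemma convexHull_subset_closure_openPolytope (h𝓜 : 𝓜.Nonempty) :
    convexHull ℝ (ind n '' ↑𝓜) ⊆ closure (openPolytope n 𝓜) := by
  refine convexHull_min ?_ convex_openPolytope.closure
  rintro _ ⟨I₀, hI₀, rfl⟩
  replace hI₀ : I₀ ∈ 𝓜 := hI₀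
  obtain ⟨_, u, hu, hu1, rfl⟩ := nonempty_openPolytope (n := n) h𝓜
  refine closure_mono ?_ (segment_subset_closure_openSegment
    (left_mem_segment ℝ (ind n I₀) (∑ I ∈ 𝓜, u I • ind n I)))
  rintro _ ⟨a, b, ha, hb, hab, rfl⟩
  refine ⟨fun I => (if I = I₀ then a else 0) + b * u I, fun I hI => ?_, ?_, ?_⟩
  · have h1 := mul_pos hb (hu I hI)
    by_cases h : I = I₀ <;> simp only [h, if_true, if_false] at * <;> positivity
  · rw [Finset.sum_add_distrib, ← Finset.mul_sum, hu1, Finset.sum_ite_eq' 𝓜 I₀, if_pos hI₀]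
    linarith
  · simp only [add_smul, Finset.sum_add_distrib, ite_smul, zero_smul, Finset.sum_ite_eq', mul_smul,
      Finset.smul_sum]
    rw [if_pos hI₀]

lemma vectorSpan_openPolytope (h𝓜 : 𝓜.Nonempty) :
    vectorSpan ℝ (openPolytope n 𝓜) = vectorSpan ℝ (ind n '' (𝓜 : Set (Finset (Fin n)))) := by
  rw [← direction_affineSpan, ← direction_affineSpan]
  congr 1
  apply le_antisymm
  · rw [← affineSpan_convexHull (ind n '' (𝓜 : Set (Finset (Fin n))))]
    exact affineSpan_mono ℝ openPolytope_subset
  · rw [affineSpan_le]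
    refine (subset_convexHull ℝ _).trans ((convexHull_subset_closure_openPolytope h𝓜).trans ?_)
    exact closure_minimal (subset_affineSpan ℝ _) (AffineSubspace.closed_of_finiteDimensional _)

lemma sum_mul_ind (θ : Fin n → ℝ) (I : Finset (Fin n)) :
    ∑ i, ind n I i * θ i = ∑ i ∈ I, θ i := by
  simp [ind]

/-- The matrix whose rows are the differences of the vertices of the matroid polytope with a fixed
vertex. -/
noncomputable def vertexMatrix (n : ℕ) (𝓜 : Finset (Finset (Fin n))) (I₀ : Finset (Fin n)) :
    Matrix (Finset (Fin n)) (Fin n) ℝ :=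
  Matrix.of fun I => if I ∈ 𝓜 then ind n I - ind n I₀ else 0

lemma vertexMatrix_mulVec (I₀ : Finset (Fin n)) (θ : Fin n → ℝ) (I : Finset (Fin n)) :
    (vertexMatrix n 𝓜 I₀).mulVec θ I =
      if I ∈ 𝓜 then ∑ i ∈ I, θ i - ∑ i ∈ I₀, θ i else 0 := by
  rw [Matrix.mulVec, dotProduct]
  by_cases hI : I ∈ 𝓜
  · simp only [vertexMatrix, Matrix.of_apply, hI, if_true, Pi.sub_apply, sub_mul,
      Finset.sum_sub_distrib, sum_mul_ind]
  · simp [vertexMatrix, hI]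

lemma rank_vertexMatrix_eq_finrank {I₀ : Finset (Fin n)} (hI₀ : I₀ ∈ 𝓜) :
    (vertexMatrix n 𝓜 I₀).rank =
      Module.finrank ℝ (vectorSpan ℝ (ind n '' (𝓜 : Set (Finset (Fin n))))) := by
  rw [Matrix.rank_eq_finrank_span_row, vectorSpan_eq_span_vsub_set_right ℝ
    (Set.mem_image_of_mem (ind n) (Finset.mem_coe.2 hI₀))]
  refine congrArg (fun W : Submodule ℝ (Fin n → ℝ) => Module.finrank ℝ W) ?_
  apply le_antisymm <;> rw [Submodule.span_le]
  · rintro _ ⟨I, rfl⟩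
    by_cases hI : I ∈ 𝓜
    · refine Submodule.subset_span ⟨ind n I, ⟨I, hI, rfl⟩, ?_⟩
      ext i
      simp [vertexMatrix, hI]
    · have : (vertexMatrix n 𝓜 I₀).row I = 0 := by
        ext i
        simp [vertexMatrix, hI]
      rw [this]
      exact Submodule.zero_mem _
  · rintro _ ⟨_, ⟨I, hI, rfl⟩, rfl⟩
    refine Submodule.subset_span ⟨I, ?_⟩
    have hI : I ∈ 𝓜 := hI
    ext i
    simp [vertexMatrix, hI]

/-- Sums over bases are constant for functions which are constant on connected components. -/
lemma sum_eq_of_exchRel {p : Finset (Fin n) → ℝ} (hp : p ∈ cellCone n k 𝓜) {θ : Fin n → ℝ}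
    (hθ : ∀ a b, exchRel n 𝓜 a b → θ a = θ b) {I₀ : Finset (Fin n)} (hI₀ : I₀ ∈ 𝓜) :
    ∀ I ∈ 𝓜, ∑ i ∈ I, θ i = ∑ i ∈ I₀, θ i := by
  suffices h : ∀ m, ∀ I ∈ 𝓜, (I \ I₀).card = m → ∑ i ∈ I, θ i = ∑ i ∈ I₀, θ i from
    fun I hI => h _ I hI rfl
  intro m
  induction m using Nat.strong_induction_on with
  | _ m ih =>
    intro I hI hm
    have hne := (cellCone_ne_zero_iff hp).2 hI
    have hne₀ := (cellCone_ne_zero_iff hp).2 hI₀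
    by_cases hsub : I ⊆ I₀
    · rw [Finset.eq_of_subset_of_card_le hsub (by rw [hp.1.card_eq hne, hp.1.card_eq hne₀])]
    obtain ⟨a, ha, ha'⟩ := Finset.not_subset.1 hsub
    obtain ⟨b, hb, hb', hb''⟩ := hp.1.exchange hne hne₀ ha ha'
    rw [cellCone_ne_zero_iff hp] at hb''
    have hbe : b ∉ I.erase a := fun h => hb' (Finset.mem_of_mem_erase h)
    have hlt : (insert b (I.erase a) \ I₀).card < m := by
      rw [← hm]
      refine Finset.card_lt_card ((Finset.ssubset_iff_of_subset ?_).2 ⟨a, ?_, ?_⟩)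
      · intro x
        simp only [Finset.mem_sdiff, Finset.mem_insert, Finset.mem_erase]
        rintro ⟨rfl | h, hx⟩
        · exact absurd hb hx
        · exact ⟨h.2, hx⟩
      · simp [ha, ha']
      · have : a ≠ b := by rintro rfl; exact ha' hb
        simp [this]
    rw [← ih _ hlt _ hb'' rfl, Finset.sum_insert hbe, ← Finset.add_sum_erase I _ ha,
      hθ a b (Or.inr ⟨I, hI, _, hb'', ha, hb', rfl⟩)]

lemma rank_vertexMatrix {p : Finset (Fin n) → ℝ} (hp : p ∈ cellCone n k 𝓜)
    {I₀ : Finset (Fin n)} (hI₀ : I₀ ∈ 𝓜) :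
    (vertexMatrix n 𝓜 I₀).rank = n - Nat.card (Quot (exchRel n 𝓜)) := by
  classical
  have hinj := LinearMap.funLeft_injective_of_surjective ℝ ℝ (Quot.mk (exchRel n 𝓜))
    Quot.mk_surjective
  have hker : LinearMap.ker (vertexMatrix n 𝓜 I₀).mulVecLin =
      LinearMap.range (LinearMap.funLeft ℝ ℝ (Quot.mk (exchRel n 𝓜))) := by
    ext θ
    rw [LinearMap.mem_ker, LinearMap.mem_range, Matrix.mulVecLin_apply]
    constructor
    · intro h
      have h' : ∀ I ∈ 𝓜, ∑ i ∈ I, θ i = ∑ i ∈ I₀, θ i := by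
        intro I hI
        have := congrFun h I
        rw [vertexMatrix_mulVec, if_pos hI] at this
        exact sub_eq_zero.1 this
      refine ⟨Quot.lift θ ?_, rfl⟩
      rintro a b (rfl | ⟨B₁, hB₁, B₂, hB₂, ha, hb, rfl⟩)
      · rfl
      · have h1 := (h' _ hB₂).trans (h' _ hB₁).symm
        rw [Finset.sum_insert fun h => hb (Finset.mem_of_mem_erase h),
          ← Finset.add_sum_erase B₁ _ ha] at h1
        linarith
    · rintro ⟨f, rfl⟩
      ext I
      rw [vertexMatrix_mulVec, Pi.zero_apply]
      split_ifs with hI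
      · rw [sub_eq_zero]
        exact sum_eq_of_exchRel hp
          (fun a b hab => congrArg f (Quot.sound hab)) hI₀ I hI
      · rfl
  have h1 := LinearMap.finrank_range_add_finrank_ker (vertexMatrix n 𝓜 I₀).mulVecLin
  have := Fintype.ofFinite (Quot (exchRel n 𝓜))
  rw [hker, LinearMap.finrank_range_of_inj hinj, Module.finrank_fintype_fun_eq_card,
    Module.finrank_fintype_fun_eq_card, Fintype.card_fin, ← Nat.card_eq_fintype_card] at h1
  rw [Matrix.rank]
  omega

end Polytope

/-! ### Cells that are single torus orbits -/

section SingleOrbit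

variable {k n : ℕ} {𝓜 : Finset (Finset (Fin n))}

/-- The positroid cell is a single orbit of the positive torus. -/
def IsSingleOrbit (n k : ℕ) (𝓜 : Finset (Finset (Fin n))) : Prop :=
  ∀ p ∈ positroidCell n k 𝓜, ∀ q ∈ positroidCell n k 𝓜, ∃ θ, q = torusOrbit p θ

lemma isSingleOrbit_of_injOn (h : Set.InjOn (momentMap n) (positroidCell n k 𝓜)) :
    IsSingleOrbit n k 𝓜 := by
  intro p hp q hq
  obtain ⟨θ, hθ⟩ := exists_momentMap_torusOrbit_eq hp (momentMap_mem_openPolytope hq)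
  exact ⟨θ, h hq (torusOrbit_mem hp θ) hθ.symm⟩

lemma continuous_momentMap : Continuous (momentMap n) := by
  refine continuous_pi fun i => ?_
  unfold momentMap
  refine continuous_finsetSum _ fun I _ => ?_
  split_ifs <;> fun_prop

lemma mem_closure_positroidCell {x : Finset (Fin n) → ℝ}
    (hx : x ∈ closure (positroidCell n k 𝓜)) :
    (∀ I, 0 ≤ x I) ∧ (∀ I ∉ 𝓜, x I = 0) ∧ ∑ I, x I ^ 2 = 1 := by
  have hcl : IsClosed {x : Finset (Fin n) → ℝ |
      (∀ I, 0 ≤ x I) ∧ (∀ I ∉ 𝓜, x I = 0) ∧ ∑ I, x I ^ 2 = 1} := by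
    have h1 : IsClosed {x : Finset (Fin n) → ℝ | ∀ I, 0 ≤ x I} := by
      simp only [Set.ofPred_forall]
      exact isClosed_iInter fun I => isClosed_le continuous_const (continuous_apply I)
    have h2 : IsClosed {x : Finset (Fin n) → ℝ | ∀ I ∉ 𝓜, x I = 0} := by
      simp only [Set.ofPred_forall]
      exact isClosed_iInter fun I => isClosed_iInter fun _ =>
        isClosed_eq (continuous_apply I) continuous_const
    exact h1.inter (h2.inter (isClosed_eq (by fun_prop) continuous_const))
  refine closure_minimal (fun p hp => ?_) hcl hx
  exact ⟨cellCone_nonneg (positroidCell_subset_cellCone hp), fun I hI => (hp.2.2 I).2 hI, hp.2.1⟩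

lemma isCompact_closure_positroidCell : IsCompact (closure (positroidCell n k 𝓜)) := by
  refine Metric.isCompact_of_isClosed_isBounded isClosed_closure ?_
  rw [isBounded_iff_forall_norm_le]
  refine ⟨1, fun x hx => ?_⟩
  obtain ⟨-, -, h⟩ := mem_closure_positroidCell hx
  rw [pi_norm_le_iff_of_nonneg zero_le_one]
  intro I
  rw [Real.norm_eq_abs, ← sq_le_one_iff_abs_le_one, ← h]
  exact Finset.single_le_sum (f := fun I => x I ^ 2) (fun _ _ => sq_nonneg _) (Finset.mem_univ I)

/-- The binomial relations satisfied by the closure of a torus orbit. -/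
lemma IsSingleOrbit.prod_eq_prod (h : IsSingleOrbit n k 𝓜) {p : Finset (Fin n) → ℝ}
    (hp : p ∈ positroidCell n k 𝓜) {w : Finset (Fin n) → ℝ} (hw0 : ∑ I ∈ 𝓜, w I = 0)
    (hw : ∀ i, ∑ I ∈ 𝓜, w I * ind n I i = 0) {x : Finset (Fin n) → ℝ}
    (hx : x ∈ closure (positroidCell n k 𝓜)) :
    ∏ I ∈ 𝓜, (x I / p I) ^ max (w I) 0 = ∏ I ∈ 𝓜, (x I / p I) ^ max (-w I) 0 := by
  have hcl : IsClosed {x : Finset (Fin n) → ℝ |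
      ∏ I ∈ 𝓜, (x I / p I) ^ max (w I) 0 = ∏ I ∈ 𝓜, (x I / p I) ^ max (-w I) 0} := by
    refine isClosed_eq ?_ ?_ <;>
    · refine continuous_finsetProd _ fun I _ => ?_
      have hI : Continuous fun x : Finset (Fin n) → ℝ => x I / p I := by fun_prop
      exact (Real.continuous_rpow_const (le_max_right _ _)).comp hI
  refine closure_minimal (fun q hq => ?_) hcl hx
  obtain ⟨θ, rfl⟩ := h p hp q hq
  obtain ⟨d, hd⟩ := log_torusOrbit hp θ
  have hpos : ∀ I ∈ 𝓜, 0 < torusOrbit p θ I / p I := fun I hI =>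
    div_pos ((hq.2.2 I).1 hI) ((hp.2.2 I).1 hI)
  have hexp : ∀ v : Finset (Fin n) → ℝ, ∏ I ∈ 𝓜, (torusOrbit p θ I / p I) ^ v I =
      Real.exp (∑ I ∈ 𝓜, (∑ i ∈ I, θ i + d) * v I) := by
    intro v
    rw [Real.exp_sum]
    refine Finset.prod_congr rfl fun I hI => ?_
    rw [Real.rpow_def_of_pos (hpos I hI), Real.log_div ((hq.2.2 I).1 hI).ne'
      ((hp.2.2 I).1 hI).ne', hd I hI, add_sub_cancel_left]
  have hz : ∑ I ∈ 𝓜, (∑ i ∈ I, θ i + d) * w I = 0 := by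
    have hI : ∀ I : Finset (Fin n), (∑ i ∈ I, θ i + d) * w I =
        ∑ i, θ i * (w I * ind n I i) + d * w I := by
      intro I
      rw [add_mul, ← sum_mul_ind, Finset.sum_mul]
      congr 1
      exact Finset.sum_congr rfl fun i _ => by ring
    simp_rw [hI, Finset.sum_add_distrib, ← Finset.mul_sum, hw0, mul_zero, add_zero]
    rw [Finset.sum_comm]
    refine Finset.sum_eq_zero fun i _ => ?_
    rw [← Finset.mul_sum, hw i, mul_zero]
  rw [Set.mem_ofPred_eq, hexp, hexp]
  congr 1
  rw [← sub_eq_zero, ← Finset.sum_sub_distrib]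
  refine Eq.trans ?_ hz
  refine Finset.sum_congr rfl fun I _ => ?_
  rw [← mul_sub]
  congr 1
  rcases le_total (w I) 0 with h | h
  · rw [max_eq_right h, max_eq_left (by linarith)]; ring
  · rw [max_eq_left h, max_eq_right (by linarith)]; ring

/-- Uniqueness part of Birch's theorem, on the closure of an orbit. -/
lemma IsSingleOrbit.injOn_closure (h : IsSingleOrbit n k 𝓜)
    (hne : (positroidCell n k 𝓜).Nonempty) :
    Set.InjOn (momentMap n) (closure (positroidCell n k 𝓜)) := by
  obtain ⟨p, hp⟩ := hne
  intro x hx y hy hxy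
  obtain ⟨hx0, hxM, hx1⟩ := mem_closure_positroidCell hx
  obtain ⟨hy0, hyM, hy1⟩ := mem_closure_positroidCell hy
  rw [sum_sq_eq_sum hxM] at hx1
  rw [sum_sq_eq_sum hyM] at hy1
  rw [momentMap_eq_sum hxM, momentMap_eq_sum hyM] at hxy
  set w : Finset (Fin n) → ℝ := fun I => x I ^ 2 - y I ^ 2 with hwdef
  have hw0 : ∑ I ∈ 𝓜, w I = 0 := by
    simp only [hwdef, Finset.sum_sub_distrib, hx1, hy1, sub_self]
  have hw : ∀ i, ∑ I ∈ 𝓜, w I * ind n I i = 0 := by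
    intro i
    have := congrFun hxy i
    simp only [Finset.sum_apply, Pi.smul_apply, smul_eq_mul] at this
    simp only [hwdef, sub_mul, Finset.sum_sub_distrib, this, sub_self]
  have hX := h.prod_eq_prod hp hw0 hw hx
  have hY := h.prod_eq_prod hp hw0 hw hy
  have hppos : ∀ I ∈ 𝓜, 0 < p I := fun I hI => (hp.2.2 I).1 hI
  have hwpos : ∀ I, 0 < w I → y I < x I := fun I hI => by
    refine lt_of_pow_lt_pow_left₀ 2 (hx0 I) ?_
    simp only [hwdef] at hI
    linarith
  have hwneg : ∀ I, w I < 0 → x I < y I := fun I hI => by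
    refine lt_of_pow_lt_pow_left₀ 2 (hy0 I) ?_
    simp only [hwdef] at hI
    linarith
  by_contra hne
  have hex : ∃ I ∈ 𝓜, w I ≠ 0 := by
    by_contra! hall
    apply hne
    ext I
    by_cases hI : I ∈ 𝓜
    · have := hall I hI
      refine (pow_left_inj₀ (hx0 I) (hy0 I) two_ne_zero).1 ?_
      simp only [hwdef] at this
      linarith
    · rw [hxM I hI, hyM I hI]
  obtain ⟨I₁, hI₁, hI₁pos⟩ := Finset.exists_pos_of_sum_zero_of_exists_nonzero w hw0 hex
  have hBle : ∏ I ∈ 𝓜, (x I / p I) ^ max (-w I) 0 ≤ ∏ I ∈ 𝓜, (y I / p I) ^ max (-w I) 0 := by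
    refine Finset.prod_le_prod (fun I hI => Real.rpow_nonneg (div_nonneg (hx0 I) (hppos I hI).le) _)
      fun I hI => ?_
    rcases lt_or_ge (w I) 0 with h | h
    · exact Real.rpow_le_rpow (div_nonneg (hx0 I) (hppos I hI).le)
        (div_le_div_of_nonneg_right (hwneg I h).le (hppos I hI).le) (le_max_right _ _)
    · rw [max_eq_right (by linarith), Real.rpow_zero, Real.rpow_zero]
  have hBpos : 0 < ∏ I ∈ 𝓜, (y I / p I) ^ max (-w I) 0 := by
    refine Finset.prod_pos fun I hI => ?_
    rcases lt_or_ge (w I) 0 with h | h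
    · exact Real.rpow_pos_of_pos (div_pos ((hx0 I).trans_lt (hwneg I h)) (hppos I hI)) _
    · rw [max_eq_right (by linarith), Real.rpow_zero]; exact one_pos
  have hAlt : ∏ I ∈ 𝓜, (y I / p I) ^ max (w I) 0 < ∏ I ∈ 𝓜, (x I / p I) ^ max (w I) 0 := by
    refine Finset.prod_lt_prod (fun I hI => ?_) (fun I hI => ?_) ⟨I₁, hI₁, ?_⟩
    · rw [← hY] at hBpos
      exact lt_of_le_of_ne (Real.rpow_nonneg (div_nonneg (hy0 I) (hppos I hI).le) _)
        (Finset.prod_ne_zero_iff.1 hBpos.ne' I hI).symm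
    · rcases lt_or_ge 0 (w I) with h | h
      · exact Real.rpow_le_rpow (div_nonneg (hy0 I) (hppos I hI).le)
          (div_le_div_of_nonneg_right (hwpos I h).le (hppos I hI).le) (le_max_right _ _)
      · rw [max_eq_right h, Real.rpow_zero, Real.rpow_zero]
    · exact Real.rpow_lt_rpow (div_nonneg (hy0 _) (hppos _ hI₁).le)
        (div_lt_div_of_pos_right (hwpos _ hI₁pos) (hppos _ hI₁)) (lt_max_of_lt_left hI₁pos)
  linarith

lemma momentMap_mem_convexHull {x : Finset (Fin n) → ℝ}
    (hx : x ∈ closure (positroidCell n k 𝓜)) :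
    momentMap n x ∈ convexHull ℝ (ind n '' ↑𝓜) := by
  obtain ⟨hx0, hxM, hx1⟩ := mem_closure_positroidCell hx
  rw [sum_sq_eq_sum hxM] at hx1
  rw [momentMap_eq_sum hxM]
  exact (convex_convexHull ℝ _).sum_mem (fun I _ => sq_nonneg _) hx1
    fun I hI => subset_convexHull ℝ _ ⟨I, hI, rfl⟩

lemma convexHull_subset_image_closure (hne : (positroidCell n k 𝓜).Nonempty) :
    convexHull ℝ (ind n '' ↑𝓜) ⊆ momentMap n '' closure (positroidCell n k 𝓜) := by
  obtain ⟨p, hp⟩ := hne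
  refine (convexHull_subset_closure_openPolytope (nonempty_of_mem_positroidCell hp)).trans
    (closure_minimal (fun x hx => ?_)
      (isCompact_closure_positroidCell.image continuous_momentMap).isClosed)
  obtain ⟨θ, rfl⟩ := exists_momentMap_torusOrbit_eq hp hx
  exact ⟨_, subset_closure (torusOrbit_mem hp θ), rfl⟩

lemma IsSingleOrbit.exists_homeomorph (h : IsSingleOrbit n k 𝓜)
    (hne : (positroidCell n k 𝓜).Nonempty) :
    ∃ h : (closure (positroidCell n k 𝓜)) ≃ₜ (convexHull ℝ (ind n '' ↑𝓜) : Set (Fin n → ℝ)),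
      ∀ x : closure (positroidCell n k 𝓜), (h x : Fin n → ℝ) = momentMap n x := by
  have : CompactSpace (closure (positroidCell n k 𝓜)) :=
    isCompact_iff_compactSpace.1 isCompact_closure_positroidCell
  set f : closure (positroidCell n k 𝓜) → (convexHull ℝ (ind n '' ↑𝓜) : Set (Fin n → ℝ)) :=
    fun x => ⟨momentMap n x, momentMap_mem_convexHull x.2⟩ with hf
  have hbij : Function.Bijective f := by
    refine ⟨fun x y hxy => Subtype.ext (h.injOn_closure hne x.2 y.2 (congrArg Subtype.val hxy)),
      fun y => ?_⟩
    obtain ⟨x, hx, hxy⟩ := convexHull_subset_image_closure hne y.2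
    exact ⟨⟨x, hx⟩, Subtype.ext hxy⟩
  have hcont : Continuous (Equiv.ofBijective f hbij) :=
    (continuous_momentMap.comp continuous_subtype_val).subtype_mk _
  exact ⟨hcont.homeoOfEquivCompactToT2, fun x => rfl⟩

end SingleOrbit

/-! ### Dimensions -/

section Dimension

variable {k n : ℕ} {𝓜 : Finset (Finset (Fin n))}

lemma finrank_vectorSpan_ind (hne : (positroidCell n k 𝓜).Nonempty) :
    Module.finrank ℝ (vectorSpan ℝ (ind n '' (𝓜 : Set (Finset (Fin n))))) =
      n - Nat.card (Quot (exchRel n 𝓜)) := by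
  obtain ⟨p, hp⟩ := hne
  obtain ⟨I₀, hI₀⟩ := nonempty_of_mem_positroidCell hp
  rw [← rank_vertexMatrix_eq_finrank hI₀,
    rank_vertexMatrix (positroidCell_subset_cellCone hp) hI₀]

lemma dimH_polytope (hne : (positroidCell n k 𝓜).Nonempty) :
    dimH (convexHull ℝ (ind n '' ↑𝓜) : Set (Fin n → ℝ)) =
      (n - Nat.card (Quot (exchRel n 𝓜)) : ℕ) := by
  obtain ⟨I₀, hI₀⟩ := nonempty_of_mem_positroidCell hne.some_mem
  have hnon : (convexHull ℝ (ind n '' ↑𝓜) : Set (Fin n → ℝ)).Nonempty :=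
    ⟨ind n I₀, subset_convexHull ℝ _ (Set.mem_image_of_mem _ hI₀)⟩
  rw [Real.Convex.dimH_eq_finrank_vectorSpan (convex_convexHull ℝ _) hnon, ← direction_affineSpan, affineSpan_convexHull,
    direction_affineSpan, finrank_vectorSpan_ind hne]

lemma contDiff_momentMap : ContDiff ℝ 1 (momentMap n) := by
  refine contDiff_pi.2 fun i => ?_
  unfold momentMap
  refine ContDiff.sum fun I _ => ?_
  split_ifs <;> fun_prop

lemma image_momentMap_positroidCell (hne : (positroidCell n k 𝓜).Nonempty) :
    momentMap n '' positroidCell n k 𝓜 = openPolytope n 𝓜 := by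
  obtain ⟨p, hp⟩ := hne
  refine Set.Subset.antisymm ?_ fun x hx => ?_
  · rintro _ ⟨q, hq, rfl⟩
    exact momentMap_mem_openPolytope hq
  · obtain ⟨θ, rfl⟩ := exists_momentMap_torusOrbit_eq hp hx
    exact ⟨_, torusOrbit_mem hp θ, rfl⟩

lemma le_dimH_positroidCell (hne : (positroidCell n k 𝓜).Nonempty) :
    ((n - Nat.card (Quot (exchRel n 𝓜)) : ℕ) : ENNReal) ≤ dimH (positroidCell n k 𝓜) := by
  have h𝓜 := nonempty_of_mem_positroidCell hne.some_mem
  rw [← finrank_vectorSpan_ind hne, ← vectorSpan_openPolytope h𝓜,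
    ← Real.Convex.dimH_eq_finrank_vectorSpan convex_openPolytope (nonempty_openPolytope h𝓜),
    ← image_momentMap_positroidCell hne]
  exact contDiff_momentMap.contDiffOn.dimH_image_le convex_univ (Set.subset_univ _)

lemma unitPluecker_smul_of_pos {c : ℝ} (hc : 0 < c) (p : Finset (Fin n) → ℝ) :
    unitPluecker (c • p) = unitPluecker p := by
  unfold unitPluecker
  simp only [Pi.smul_apply, smul_eq_mul, mul_pow, ← Finset.mul_sum]
  rw [Real.sqrt_mul (sq_nonneg c), Real.sqrt_sq hc.le, smul_smul, mul_inv, mul_right_comm,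
    inv_mul_cancel₀ hc.ne', one_mul]

lemma IsSingleOrbit.dimH_le (h : IsSingleOrbit n k 𝓜)
    (hne : (positroidCell n k 𝓜).Nonempty) :
    dimH (positroidCell n k 𝓜) ≤ (n - Nat.card (Quot (exchRel n 𝓜)) : ℕ) := by
  obtain ⟨p, hp⟩ := hne
  obtain ⟨I₀, hI₀⟩ := nonempty_of_mem_positroidCell hp
  set F : LinearMap.range (vertexMatrix n 𝓜 I₀).mulVecLin → (Finset (Fin n) → ℝ) :=
    fun r => unitPluecker fun I => Real.exp ((r : Finset (Fin n) → ℝ) I) * p I with hF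
  have hc : ∀ I, ContDiff ℝ 1 fun r : LinearMap.range (vertexMatrix n 𝓜 I₀).mulVecLin =>
      Real.exp ((r : Finset (Fin n) → ℝ) I) * p I := by
    intro I
    have h1 : ContDiff ℝ 1 fun r : LinearMap.range (vertexMatrix n 𝓜 I₀).mulVecLin =>
        (r : Finset (Fin n) → ℝ) I :=
      (contDiff_apply ℝ ℝ I).comp
        (LinearMap.range (vertexMatrix n 𝓜 I₀).mulVecLin).subtypeL.contDiff
    exact h1.exp.mul contDiff_const
  have hFc : ContDiff ℝ 1 F := by
    refine contDiff_pi.2 fun I => ?_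
    refine ContDiff.mul ?_ (hc I)
    exact ((ContDiff.sum fun I _ => (hc I).pow 2).sqrt
      fun r => (sum_exp_sq_pos hp r).ne').inv fun r =>
        (Real.sqrt_pos.2 (sum_exp_sq_pos hp r)).ne'
  have hsub : positroidCell n k 𝓜 ⊆ Set.range F := by
    intro q hq
    obtain ⟨θ, rfl⟩ := h p hp q hq
    refine ⟨⟨_, θ, rfl⟩, ?_⟩
    rw [torusOrbit, ← unitPluecker_smul_of_pos (Real.exp_pos (-∑ i ∈ I₀, θ i))]
    simp only [hF]
    congr 1
    ext I
    rw [Matrix.mulVecLin_apply, vertexMatrix_mulVec, Pi.smul_apply, smul_eq_mul]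
    by_cases hI : I ∈ 𝓜
    · rw [if_pos hI, ← mul_assoc, ← Real.exp_add]
      congr 2
      ring
    · rw [(hp.2.2 I).2 hI]; simp
  rw [← rank_vertexMatrix (positroidCell_subset_cellCone hp) hI₀]
  exact (dimH_mono hsub).trans hFc.dimH_range_le

/-- Two points in different orbits are separated by a torus-invariant logarithmic function. -/
lemma exists_invariant_of_not_orbit {p q : Finset (Fin n) → ℝ} (hp : p ∈ positroidCell n k 𝓜)
    (hq : q ∈ positroidCell n k 𝓜) (hpq : ∀ θ, q ≠ torusOrbit p θ) :
    ∃ φ : (Finset (Fin n) → ℝ) →ₗ[ℝ] ℝ,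
      φ (fun I => if I ∈ 𝓜 then Real.log (p I) else 0) ≠
        φ (fun I => if I ∈ 𝓜 then Real.log (q I) else 0) ∧
      ∀ x ∈ positroidCell n k 𝓜, ∀ θ,
        φ (fun I => if I ∈ 𝓜 then Real.log (torusOrbit x θ I) else 0) =
          φ (fun I => if I ∈ 𝓜 then Real.log (x I) else 0) := by
  set T : ((Fin n → ℝ) × ℝ) →ₗ[ℝ] (Finset (Fin n) → ℝ) :=
    { toFun := fun y I => if I ∈ 𝓜 then ∑ i ∈ I, y.1 i + y.2 else 0
      map_add' := by
        intro y z; ext I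
        simp only [Prod.fst_add, Prod.snd_add, Pi.add_apply, Finset.sum_add_distrib]
        split_ifs <;> ring
      map_smul' := by
        intro c y; ext I
        simp [Finset.mul_sum, mul_add] } with hT
  have hTapp : ∀ (θ : Fin n → ℝ) (d : ℝ) (I : Finset (Fin n)),
      T (θ, d) I = if I ∈ 𝓜 then ∑ i ∈ I, θ i + d else 0 := fun _ _ _ => rfl
  have hnot : (fun I => if I ∈ 𝓜 then Real.log (p I) else 0) -
      (fun I => if I ∈ 𝓜 then Real.log (q I) else 0) ∉ LinearMap.range T := by
    rintro ⟨⟨θ, d⟩, h⟩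
    apply hpq (-θ)
    have hpt : ∀ I, Real.exp (∑ i ∈ I, (-θ) i) * p I = Real.exp d * q I := by
      intro I
      by_cases hI : I ∈ 𝓜
      · have := congrFun h I
        rw [hTapp, Pi.sub_apply, if_pos hI, if_pos hI, if_pos hI] at this
        rw [← Real.exp_log ((hp.2.2 I).1 hI), ← Real.exp_log ((hq.2.2 I).1 hI), ← Real.exp_add,
          ← Real.exp_add]
        congr 1
        simp only [Pi.neg_apply, Finset.sum_neg_distrib]
        linarith
      · rw [(hp.2.2 I).2 hI, (hq.2.2 I).2 hI, mul_zero, mul_zero]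
    have hfun : (fun I : Finset (Fin n) => Real.exp (∑ i ∈ I, (-θ) i) * p I) =
        Real.exp d • q := funext hpt
    rw [torusOrbit, hfun, unitPluecker_smul_of_pos (Real.exp_pos d), unitPluecker, hq.2.1]
    simp
  obtain ⟨φ, hφ, hker⟩ := Submodule.exists_le_ker_of_notMem hnot
  refine ⟨φ, fun h => hφ (by rw [map_sub, h, sub_self]), fun x hx θ => ?_⟩
  obtain ⟨d, hd⟩ := log_torusOrbit hx θ
  have h0 : φ (T (θ, d)) = 0 := hker ⟨_, rfl⟩
  rw [← sub_eq_zero, ← map_sub]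
  refine Eq.trans (congrArg φ ?_) h0
  ext I
  rw [Pi.sub_apply, hTapp]
  split_ifs with hI
  · rw [hd I hI, add_sub_cancel_left]
  · rw [sub_zero]

lemma finrank_vectorSpan_Icc_prod {V : Type*} [NormedAddCommGroup V] [NormedSpace ℝ V]
    [FiniteDimensional ℝ V] {a b : ℝ} (hab : a < b) {s : Set V} (hs : s.Nonempty) :
    Module.finrank ℝ (vectorSpan ℝ s) + 1 ≤
      Module.finrank ℝ (vectorSpan ℝ (Set.Icc a b ×ˢ s)) := by
  set W := vectorSpan ℝ (Set.Icc a b ×ˢ s) with hW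
  have h1 : ∀ r : ℝ, ((r, 0) : ℝ × V) ∈ W := by
    intro r
    obtain ⟨y, hy⟩ := hs
    have : ((b, y) : ℝ × V) -ᵥ (a, y) ∈ W := vsub_mem_vectorSpan ℝ
      ⟨Set.right_mem_Icc.2 hab.le, hy⟩ ⟨Set.left_mem_Icc.2 hab.le, hy⟩
    have h := W.smul_mem (r / (b - a)) this
    have hba : b - a ≠ 0 := (sub_pos.2 hab).ne'
    have e : (r / (b - a)) • (((b, y) : ℝ × V) -ᵥ (a, y)) = (r, 0) := by
      ext <;> simp [hba]
    rwa [e] at h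
  have h2 : vectorSpan ℝ s ≤ W.comap (LinearMap.inr ℝ ℝ V) := by
    rw [vectorSpan, Submodule.span_le]
    rintro _ ⟨x, hx, y, hy, rfl⟩
    have : ((a, x) : ℝ × V) -ᵥ (a, y) ∈ W := vsub_mem_vectorSpan ℝ
      ⟨Set.left_mem_Icc.2 hab.le, hx⟩ ⟨Set.left_mem_Icc.2 hab.le, hy⟩
    simpa using this
  set g : (ℝ × vectorSpan ℝ s) →ₗ[ℝ] W :=
    (LinearMap.prodMap LinearMap.id (vectorSpan ℝ s).subtype).codRestrict W (by
      rintro ⟨r, v⟩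
      have := W.add_mem (h1 r) (h2 v.2)
      simpa using this) with hg
  have hinj : Function.Injective g := by
    rintro ⟨r, v⟩ ⟨r', v'⟩ h
    have h' : ((r, (v : V)) : ℝ × V) = (r', (v' : V)) := congrArg Subtype.val h
    obtain ⟨h3, h4⟩ := Prod.mk.inj h'
    rw [h3, Subtype.ext h4]
  have := LinearMap.finrank_le_finrank_of_injective hinj
  rw [Module.finrank_prod, Module.finrank_self] at this
  omega

lemma isSingleOrbit_of_dimH_le (hne : (positroidCell n k 𝓜).Nonempty)
    (hdim : dimH (positroidCell n k 𝓜) ≤ (n - Nat.card (Quot (exchRel n 𝓜)) : ℕ)) :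
    IsSingleOrbit n k 𝓜 := by
  have h𝓜 := nonempty_of_mem_positroidCell hne.some_mem
  by_contra hnot
  simp only [IsSingleOrbit, not_forall, not_exists] at hnot
  obtain ⟨p, hp, q, hq, hpq⟩ := hnot
  obtain ⟨φ, hφ, hinv⟩ := exists_invariant_of_not_orbit hp hq hpq
  set f : (Finset (Fin n) → ℝ) → ℝ :=
    fun x => φ (fun I => if I ∈ 𝓜 then Real.log (x I) else 0) with hf
  have hφc : ContDiff ℝ 1 φ := (LinearMap.toContinuousLinearMap φ).contDiff
  have hfc : ∀ x ∈ positroidCell n k 𝓜, ContDiffAt ℝ 1 f x := by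
    intro x hx
    refine hφc.contDiffAt.comp x (contDiffAt_pi.2 fun I => ?_)
    by_cases hI : I ∈ 𝓜
    · simp only [hI, if_true]
      exact (contDiff_apply ℝ ℝ I).contDiffAt.log ((hx.2.2 I).1 hI).ne'
    · simp only [hI, if_false]
      exact contDiffAt_const
  have hfcont : ContinuousOn f (positroidCell n k 𝓜) :=
    fun x hx => (hfc x hx).continuousAt.continuousWithinAt
  obtain ⟨a, b, hab, hIcc⟩ : ∃ a b, a < b ∧ Set.Icc a b ⊆ f '' positroidCell n k 𝓜 := by
    rcases lt_or_gt_of_ne hφ with h | h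
    · exact ⟨_, _, h, isPreconnected_positroidCell.intermediate_value hp hq hfcont⟩
    · exact ⟨_, _, h, isPreconnected_positroidCell.intermediate_value hq hp hfcont⟩
  have hsub : Set.Icc a b ×ˢ openPolytope n 𝓜 ⊆
      (fun x => (f x, momentMap n x)) '' positroidCell n k 𝓜 := by
    rintro ⟨r, y⟩ ⟨hr, hy⟩
    obtain ⟨x, hx, rfl⟩ := hIcc hr
    obtain ⟨θ, rfl⟩ := exists_momentMap_torusOrbit_eq hx hy
    exact ⟨_, torusOrbit_mem hx θ, Prod.ext (hinv x hx θ) rfl⟩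
  have h1 : dimH (Set.Icc a b ×ˢ openPolytope n 𝓜) ≤ dimH (positroidCell n k 𝓜) := by
    refine (dimH_mono hsub).trans (dimH_image_le_of_locally_lipschitzOn fun x hx => ?_)
    obtain ⟨K, t, ht, hK⟩ := ((hfc x hx).prodMk
      contDiff_momentMap.contDiffAt).exists_lipschitzOnWith
    exact ⟨K, t, mem_nhdsWithin_of_mem_nhds ht, hK⟩
  rw [Real.Convex.dimH_eq_finrank_vectorSpan ((convex_Icc a b).prod convex_openPolytope)
    ((Set.nonempty_Icc.2 hab.le).prod (nonempty_openPolytope h𝓜))] at h1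
  have h2 := finrank_vectorSpan_Icc_prod hab (nonempty_openPolytope (n := n) h𝓜)
  rw [vectorSpan_openPolytope h𝓜, finrank_vectorSpan_ind hne] at h2
  have h3 := h1.trans hdim
  rw [Nat.cast_le] at h3
  omega

end Dimension

/-- For a positroid cell `S_π ⊆ Gr⁺_{k,n}` with positroid `M_π`, the following
are equivalent: (1) the moment map is injective on `S_π`; (2) the moment map
restricts to a homeomorphism from the closure of `S_π` onto the positroid
polytope `Γ_π`; (3) `dim S_π = dim Γ_π = n − c`, where `c` is the number of
connected components of `M_π`. -/
theorem moment_map_injective_tfae (n k : ℕ) (𝓜 : Finset (Finset (Fin n)))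
    (hcard : ∀ I ∈ 𝓜, I.card = k) (hne : (positroidCell n k 𝓜).Nonempty) :
    (Set.InjOn (momentMap n) (positroidCell n k 𝓜) ↔
      ∃ h : (closure (positroidCell n k 𝓜)) ≃ₜ
          (convexHull ℝ (ind n '' ↑𝓜) : Set (Fin n → ℝ)),
        ∀ x : closure (positroidCell n k 𝓜), (h x : Fin n → ℝ) = momentMap n x) ∧
    (Set.InjOn (momentMap n) (positroidCell n k 𝓜) ↔
      (dimH (positroidCell n k 𝓜) = (n - Nat.card (Quot (exchRel n 𝓜)) : ℕ) ∧
       dimH (convexHull ℝ (ind n '' ↑𝓜) : Set (Fin n → ℝ))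
          = (n - Nat.card (Quot (exchRel n 𝓜)) : ℕ))) := by
  refine ⟨⟨fun h => (isSingleOrbit_of_injOn h).exists_homeomorph hne, ?_⟩,
    ⟨fun h => ⟨?_, dimH_polytope hne⟩, fun h => ?_⟩⟩
  · rintro ⟨h, hh⟩ x hx y hy hxy
    have := h.injective (a₁ := ⟨x, subset_closure hx⟩) (a₂ := ⟨y, subset_closure hy⟩)
      (Subtype.ext (by rw [hh, hh]; exact hxy))
    exact congrArg Subtype.val this
  · exact le_antisymm ((isSingleOrbit_of_injOn h).dimH_le hne) (le_dimH_positroidCell hne)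
  · exact ((isSingleOrbit_of_dimH_le hne h.1.le).injOn_closure hne).mono subset_closure
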